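/- arXiv:2212.14792 — 6 statements merged into one kernel-verified Lean document; each statement's English description precedes it below -/
import Mathlib

section
/- Let Γ contain a triangle C (a cycle on 3 vertices) and a path P of length s whose vertices are v_0, v_1, …, v_s with v_0 a vertex of C and v_1, …, v_s not in C. If the union of the vertex sets of C and P is a dominating set of Γ, then for every integer t ≥ s+2 the maximal graded ideal m is an associated prime of R/I^t (i.e., depth R/I^t = 0). -/
open MvPolynomial

noncomputable section

/-- The edge ideal of a graph `Γ` on vertex set `σ`, in `k[x_i : i ∈ σ]`. -/
def edgeIdeal (k : Type) [Field k] {σ : Type} (Γ : SimpleGraph σ) :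
    Ideal (MvPolynomial σ k) :=
  Ideal.span { m | ∃ i j : σ, Γ.Adj i j ∧ m = X i * X j }

/-- The maximal graded ideal `(x_i : i ∈ σ)` of `k[x_i : i ∈ σ]`. -/
def maxIdeal (k : Type) [Field k] (σ : Type) : Ideal (MvPolynomial σ k) :=
  Ideal.span (Set.range (X : σ → MvPolynomial σ k))

/-- `depth R/J = 0`, i.e. the maximal graded ideal is an associated prime of `R/J`. -/
def DepthZero (k : Type) [Field k] {σ : Type} (J : Ideal (MvPolynomial σ k)) : Prop :=
  maxIdeal k σ ∈ associatedPrimes (MvPolynomial σ k) (MvPolynomial σ k ⧸ J)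

/-- The `i`-th local cohomology of `R/J` with support in the maximal graded ideal. -/
def locCoh (k : Type) [Field k] {σ : Type} (J : Ideal (MvPolynomial σ k)) (i : ℕ) :=
  (localCohomology (maxIdeal k σ) i).obj (ModuleCat.of _ (MvPolynomial σ k ⧸ J))

/-- `depth R/J`, defined as the least `i` with `H^i_m(R/J) ≠ 0`. -/
def rDepth (k : Type) [Field k] {σ : Type} (J : Ideal (MvPolynomial σ k)) : ℕ :=
  sInf { i | Nontrivial (locCoh k J i) }

/-- A set `U` of vertices is dominating: every vertex outside `U` is adjacent to a
vertex of `U`. -/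
def Dominating {σ : Type} (Γ : SimpleGraph σ) (U : Set σ) : Prop :=
  ∀ v ∉ U, ∃ u ∈ U, Γ.Adj u v

/-- The closed neighborhood `N[v]` of a vertex. -/
def closedNbhd {σ : Type} (Γ : SimpleGraph σ) (v : σ) : Set σ :=
  insert v { u | Γ.Adj v u }

/-- The closed neighborhood `N[C]` of a set of vertices. -/
def closedNbhdSet {σ : Type} (Γ : SimpleGraph σ) (C : Set σ) : Set σ :=
  ⋃ v ∈ C, closedNbhd Γ v

/-- An odd cycle of length `m` (given as an injective map `ZMod m → σ` with consecutive
vertices adjacent) in `Γ`. -/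
def IsOddCycle {σ : Type} (Γ : SimpleGraph σ) (m : ℕ) (c : ZMod m → σ) : Prop :=
  Odd m ∧ 3 ≤ m ∧ Function.Injective c ∧ ∀ i, Γ.Adj (c i) (c (i + 1))

/-- `F` is an independent set of `Γ`. -/
def IsIndep {σ : Type} [Fintype σ] [DecidableEq σ] (Γ : SimpleGraph σ) (F : Finset σ) : Prop :=
  ∀ i ∈ F, ∀ j ∈ F, ¬ Γ.Adj i j

/-- `F` is a maximal independent set of `Γ`. -/
def IsMaxIndep {σ : Type} [Fintype σ] [DecidableEq σ] (Γ : SimpleGraph σ) (F : Finset σ) : Prop :=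
  IsIndep Γ F ∧ ∀ G : Finset σ, IsIndep Γ G → F ⊆ G → G = F

/-- The prime ideal `P_F = (x_i : i ∉ F)`. -/
def PF (k : Type) [Field k] {σ : Type} [Fintype σ] [DecidableEq σ] (F : Finset σ) :
    Ideal (MvPolynomial σ k) :=
  Ideal.span { m | ∃ i ∉ F, m = X i }

/-- The `t`-th symbolic power `I^{(t)} = ⋂_{F maximal independent} P_F^t` of the edge ideal. -/
def symbPow (k : Type) [Field k] {σ : Type} [Fintype σ] [DecidableEq σ]
    (Γ : SimpleGraph σ) (t : ℕ) : Ideal (MvPolynomial σ k) :=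
  ⨅ F ∈ { F : Finset σ | IsMaxIndep Γ F }, PF k F ^ t

/-- The monomial `x^a`. -/
def xPow (k : Type) [Field k] {σ : Type} [Fintype σ] (a : σ → ℕ) : MvPolynomial σ k :=
  ∏ i, X i ^ a i

/-- The localization `R[x_i^{-1} : i ∈ F]`. -/
abbrev locAt (k : Type) [Field k] {σ : Type} (F : Finset σ) :=
  Localization (Submonoid.closure ((fun i => (X i : MvPolynomial σ k)) '' (F : Set σ)))

/-- The degree complex `Δ_a(J) = {F : x^a ∉ J·R[x_i^{-1} : i ∈ F]}` of a monomial ideal `J`. -/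
def degComplex (k : Type) [Field k] {σ : Type} [Fintype σ] (J : Ideal (MvPolynomial σ k))
    (a : σ → ℕ) : Set (Finset σ) :=
  { F | algebraMap (MvPolynomial σ k) (locAt k F) (xPow k a) ∉
      J.map (algebraMap (MvPolynomial σ k) (locAt k F)) }

/-- `F` is a facet (maximal face) of the complex `Δ`. -/
def IsFacet {σ : Type} (Δ : Set (Finset σ)) (F : Finset σ) : Prop :=
  F ∈ Δ ∧ ∀ G ∈ Δ, F ⊆ G → G = F

/-- The complex `Δ` is disconnected: its vertex set splits into two nonempty parts such that
no face meets both. -/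
def ComplexDisconnected {σ : Type} (Δ : Set (Finset σ)) : Prop :=
  ∃ A B : Set σ, A.Nonempty ∧ B.Nonempty ∧ Disjoint A B ∧
    (∀ i, {i} ∈ Δ ↔ i ∈ A ∪ B) ∧
    ∀ F ∈ Δ, ¬ ((∃ i ∈ F, i ∈ A) ∧ (∃ j ∈ F, j ∈ B))

/-- The polynomial ring `R_v = k[x_i : i ≠ v]`. -/
abbrev Rv (k : Type) [Field k] {σ : Type} (v : σ) := MvPolynomial { i : σ // i ≠ v } k

/-- The localization `R[x_v^{-1}]`. -/
abbrev LocAway (k : Type) [Field k] {σ : Type} (v : σ) :=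
  Localization.Away (X v : MvPolynomial σ k)

/-- For an ideal `I` of `R`, the ideal `I_v = I·R[x_v^{-1}] ∩ R_v` of `R_v`. -/
def idealV (k : Type) [Field k] {σ : Type} (I : Ideal (MvPolynomial σ k)) (v : σ) :
    Ideal (Rv k v) :=
  Ideal.comap ((algebraMap (MvPolynomial σ k) (LocAway k v)).comp
      (MvPolynomial.rename (Subtype.val : { i : σ // i ≠ v } → σ)).toRingHom)
    (I.map (algebraMap (MvPolynomial σ k) (LocAway k v)))

/-- The edge ideal of the induced subgraph `Γ_U` in `k[x_i : i ∈ U]`. -/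
def edgeIdealOn (k : Type) [Field k] {σ : Type} (Γ : SimpleGraph σ) (U : Set σ) :
    Ideal (MvPolynomial U k) :=
  Ideal.span { m | ∃ i j : U, Γ.Adj (i : σ) (j : σ) ∧ m = X i * X j }

/-- `Γ` has no isolated vertices. -/
def NoIsolated {σ : Type} (Γ : SimpleGraph σ) : Prop :=
  ∀ v : σ, ∃ u : σ, Γ.Adj v u

lemma aux_edge (k : Type) [Field k] {σ : Type} (Γ : SimpleGraph σ) {i j : σ} (h : Γ.Adj i j) :
    (X i * X j : MvPolynomial σ k) ∈ edgeIdeal k Γ :=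
  Ideal.subset_span ⟨i, j, h, rfl⟩

lemma aux_max_eq (k : Type) [Field k] (σ : Type) :
    maxIdeal k σ = RingHom.ker (constantCoeff : MvPolynomial σ k →+* k) := by
  apply le_antisymm
  · refine Ideal.span_le.2 ?_
    rintro _ ⟨i, rfl⟩
    simp [RingHom.mem_ker]
  · intro p hp
    have key : ∀ p : MvPolynomial σ k, p - C (constantCoeff p) ∈ maxIdeal k σ := by
      intro p
      induction p using MvPolynomial.induction_on with
      | C a => simp
      | add p q hp hq =>
        have := Ideal.add_mem _ hp hq
        convert this using 1
        simp only [map_add]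
        ring
      | mul_X p i _ =>
        simp only [map_mul, constantCoeff_X, mul_zero, map_zero, sub_zero]
        exact Ideal.mul_mem_left _ _ (Ideal.subset_span ⟨i, rfl⟩)
    have h := key p
    rw [RingHom.mem_ker] at hp
    simpa [hp] using h

lemma aux_isMax (k : Type) [Field k] (σ : Type) : (maxIdeal k σ).IsMaximal := by
  rw [aux_max_eq]
  exact RingHom.ker_isMaximal_of_surjective _ fun a => ⟨C a, by simp⟩

lemma aux_depth (k : Type) [Field k] {σ : Type} (J : Ideal (MvPolynomial σ k))
    (f : MvPolynomial σ k) (hf : f ∉ J) (h : ∀ i, f * X i ∈ J) : DepthZero k J := by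
  have hm := aux_isMax k σ
  refine ⟨hm.isPrime, Ideal.Quotient.mk J f, ?_⟩
  refine hm.eq_of_le ?_ ?_
  · rw [Ne, Ideal.radical_eq_top, Ideal.eq_top_iff_one, Submodule.mem_colon_singleton, one_smul,
      Submodule.mem_bot, Ideal.Quotient.eq_zero_iff_mem]
    exact hf
  · refine le_trans ?_ Ideal.le_radical
    refine Ideal.span_le.2 ?_
    rintro _ ⟨i, rfl⟩
    rw [SetLike.mem_coe, Submodule.mem_colon_singleton, Submodule.mem_bot]
    change Ideal.Quotient.mk J (X i * f) = 0
    rw [Ideal.Quotient.eq_zero_iff_mem, mul_comm]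
    exact h i

lemma aux_deg (k : Type) [Field k] {σ : Type} (Γ : SimpleGraph σ) (t : ℕ) (f : MvPolynomial σ k)
    (hf : f ∈ edgeIdeal k Γ ^ t) :
    (Polynomial.X : Polynomial k) ^ (2 * t) ∣
      aeval (fun _ : σ => (Polynomial.X : Polynomial k)) f := by
  have h1 : edgeIdeal k Γ ≤ (Ideal.span {(Polynomial.X : Polynomial k) ^ 2}).comap
      (aeval (fun _ : σ => (Polynomial.X : Polynomial k))) := by
    refine Ideal.span_le.2 ?_
    rintro _ ⟨i, j, _, rfl⟩
    simp [Ideal.mem_span_singleton, pow_two]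
  have h2 := (Ideal.le_comap_pow _ t) (Ideal.pow_right_mono h1 t hf)
  rw [Ideal.mem_comap, Ideal.span_singleton_pow, Ideal.mem_span_singleton, ← pow_mul] at h2
  exact h2

lemma aux_tri (k : Type) [Field k] {σ : Type} (Γ : SimpleGraph σ)
    {u₁ u₂ u₃ : σ} (h12 : Γ.Adj u₁ u₂) (h13 : Γ.Adj u₁ u₃) (h23 : Γ.Adj u₂ u₃)
    (i v : σ) (hv : v ∈ ({u₁, u₂, u₃} : Set σ)) (hvi : Γ.Adj v i) :
    (X u₁ * X u₂ * X u₃ * X i : MvPolynomial σ k) ∈ edgeIdeal k Γ ^ 2 := by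
  have e := aux_edge k Γ hvi
  rw [pow_two]
  rcases hv with rfl | rfl | rfl
  · convert Ideal.mul_mem_mul e (aux_edge k Γ h23) using 1
    ring
  · convert Ideal.mul_mem_mul e (aux_edge k Γ h13) using 1
    ring
  · convert Ideal.mul_mem_mul e (aux_edge k Γ h12) using 1
    ring

lemma aux_key (k : Type) [Field k] {σ : Type} (Γ : SimpleGraph σ)
    {u₁ u₂ u₃ : σ} (h12 : Γ.Adj u₁ u₂) (h13 : Γ.Adj u₁ u₃) (h23 : Γ.Adj u₂ u₃)
    (q : ℕ → σ) (hq0 : q 0 ∈ ({u₁, u₂, u₃} : Set σ)) (s : ℕ)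
    (hq : ∀ j < s, Γ.Adj (q j) (q (j + 1))) (i v : σ)
    (hv : v ∈ ({u₁, u₂, u₃} : Set σ) ∨ ∃ j ≤ s, v = q j) (hvi : Γ.Adj v i) :
    (X u₁ * X u₂ * X u₃ * (∏ j ∈ Finset.range s, (X (q j) * X (q (j + 1)))) * X i :
      MvPolynomial σ k) ∈ edgeIdeal k Γ ^ (s + 2) := by
  induction s generalizing i v with
  | zero =>
    have hv' : v ∈ ({u₁, u₂, u₃} : Set σ) := by
      rcases hv with h | ⟨j, hj, rfl⟩
      · exact h
      · obtain rfl : j = 0 := by omega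
        exact hq0
    simpa using aux_tri k Γ h12 h13 h23 i v hv' hvi
  | succ s ih =>
    have ih' := ih (fun j hj => hq j (by omega))
    rw [Finset.prod_range_succ, show s + 1 + 2 = (s + 2) + 1 by ring, pow_succ]
    by_cases hc : v ∈ ({u₁, u₂, u₃} : Set σ) ∨ ∃ j ≤ s, v = q j
    · convert Ideal.mul_mem_mul (ih' i v hc hvi) (aux_edge k Γ (hq s (by omega))) using 1
      ring
    · have hvs : v = q (s + 1) := by
        rcases hv with h | ⟨j, hj, rfl⟩
        · exact absurd (Or.inl h) hc
        · rcases Nat.lt_or_ge s j with h | h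
          · rw [show j = s + 1 by omega]
          · exact absurd (Or.inr ⟨j, h, rfl⟩) hc
      subst hvs
      have hw : ∃ w, (w ∈ ({u₁, u₂, u₃} : Set σ) ∨ ∃ j ≤ s, w = q j) ∧ Γ.Adj w (q s) := by
        rcases Nat.eq_zero_or_pos s with rfl | h
        · rcases hq0 with h | h | h
          · exact ⟨u₂, by simp, h ▸ h12.symm⟩
          · exact ⟨u₁, by simp, h ▸ h12⟩
          · exact ⟨u₁, by simp, by rw [Set.mem_singleton_iff.1 h]; exact h13⟩
        · refine ⟨q (s - 1), Or.inr ⟨s - 1, by omega, rfl⟩, ?_⟩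
          have := hq (s - 1) (by omega)
          rwa [Nat.sub_add_cancel h] at this
      obtain ⟨w, hw, hws⟩ := hw
      convert Ideal.mul_mem_mul (ih' (q s) w hw hws) (aux_edge k Γ hvi) using 1
      ring

/-- If `Γ` contains a triangle `C` together with a path of length `s`
meeting `C` only at its initial vertex, and the union of the vertex sets of the triangle
and the path is dominating in `Γ`, then `depth R/I^t = 0` (the maximal graded ideal is an
associated prime of `R/I^t`) for all `t ≥ s + 2`. -/
theorem stmt0 (k : Type) [Field k] (n : ℕ) (Γ : SimpleGraph (Fin n))
    (hiso : NoIsolated Γ)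
    (u₁ u₂ u₃ : Fin n) (h12 : Γ.Adj u₁ u₂) (h13 : Γ.Adj u₁ u₃) (h23 : Γ.Adj u₂ u₃)
    (s : ℕ) (p : Fin (s + 1) → Fin n) (hinj : Function.Injective p)
    (hpath : ∀ i : Fin s, Γ.Adj (p i.castSucc) (p i.succ))
    (hp0 : p 0 ∈ ({u₁, u₂, u₃} : Set (Fin n)))
    (hpC : ∀ i : Fin (s + 1), i ≠ 0 → p i ∉ ({u₁, u₂, u₃} : Set (Fin n)))
    (hdom : Dominating Γ (({u₁, u₂, u₃} : Set (Fin n)) ∪ Set.range p))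
    (t : ℕ) (ht : s + 2 ≤ t) :
    DepthZero k ((edgeIdeal k Γ) ^ t) := by
  let q : ℕ → Fin n := fun j => p ⟨min j s, by omega⟩
  have hqv : ∀ j : Fin (s + 1), q j = p j := by
    intro j
    simp only [q]
    congr 1
    ext
    simp only
    omega
  have hq0 : q 0 ∈ ({u₁, u₂, u₃} : Set (Fin n)) := by
    have := hqv 0
    rw [Fin.val_zero] at this
    rwa [this]
  have hq : ∀ j < s, Γ.Adj (q j) (q (j + 1)) := by
    intro j hj
    have h := hpath ⟨j, hj⟩
    rw [← hqv, ← hqv] at h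
    exact h
  have hnb : ∀ i, ∃ v, (v ∈ ({u₁, u₂, u₃} : Set (Fin n)) ∨ ∃ j ≤ s, v = q j) ∧ Γ.Adj v i := by
    intro i
    by_cases hi : i ∈ ({u₁, u₂, u₃} : Set (Fin n)) ∪ Set.range p
    · have htri : ∀ i ∈ ({u₁, u₂, u₃} : Set (Fin n)), ∃ v,
          (v ∈ ({u₁, u₂, u₃} : Set (Fin n)) ∨ ∃ j ≤ s, v = q j) ∧ Γ.Adj v i := by
        rintro i (rfl | rfl | rfl)
        · exact ⟨u₂, by simp, h12.symm⟩
        · exact ⟨u₁, by simp, h12⟩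
        · exact ⟨u₁, by simp, h13⟩
      rcases hi with h | ⟨j, rfl⟩
      · exact htri i h
      · by_cases hj : j = 0
        · rw [hj]
          exact htri _ hp0
        · have hj' : (j : ℕ) ≠ 0 := fun h => hj (Fin.ext h)
          refine ⟨q (j - 1), Or.inr ⟨j - 1, by omega, rfl⟩, ?_⟩
          have := hq (j - 1) (by omega)
          rwa [Nat.sub_add_cancel (by omega), hqv] at this
    · obtain ⟨v, hv, hvi⟩ := hdom i hi
      refine ⟨v, ?_, hvi⟩
      rcases hv with h | ⟨j, rfl⟩
      · exact Or.inl h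
      · exact Or.inr ⟨j, by omega, (hqv j).symm⟩
  obtain ⟨r, rfl⟩ := Nat.exists_eq_add_of_le ht
  refine aux_depth k _ (X u₁ * X u₂ * X u₃ * (∏ j ∈ Finset.range s, (X (q j) * X (q (j + 1)))) *
    (X u₁ * X u₂) ^ r) ?_ ?_
  · intro hmem
    have h := aux_deg k Γ _ _ hmem
    simp only [map_mul, map_prod, map_pow, aeval_X, Finset.prod_const, Finset.card_range,
      ← pow_two, ← pow_mul, ← pow_succ, ← pow_add] at h
    have := (pow_dvd_pow_iff Polynomial.X_ne_zero Polynomial.not_isUnit_X).1 h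
    omega
  · intro i
    obtain ⟨v, hv, hvi⟩ := hnb i
    rw [pow_add]
    convert Ideal.mul_mem_mul (aux_key k Γ h12 h13 h23 q hq0 s hq i v hv hvi)
      (Ideal.pow_mem_pow (aux_edge k Γ h12) r) using 1
    ring

end
end

section
/- Fix a vertex v of Γ and an integer t ≥ 1. Then the maximal graded ideal of R_v is an associated prime of R_v/I_v^t if and only if the maximal graded ideal of S is an associated prime of S/J^t, where J is the edge ideal of the induced subgraph Γ_{V∖N[v]} in S = k[x_i : i ∉ N[v]]. -/
open MvPolynomial

noncomputable section

namespace Gal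
variable {σ ε : Type} [Fintype ε] [DecidableEq σ]

/-- indicator -/
def ind (z x : σ) : ℕ := if x = z then 1 else 0

/-- degree vector -/
def dg (δ : ε → σ → ℕ) (E : ε → ℕ) (x : σ) : ℕ := ∑ e, E e * δ e x

theorem dg_add (δ : ε → σ → ℕ) (E F : ε → ℕ) (x : σ) :
    dg δ (fun e => E e + F e) x = dg δ E x + dg δ F x := by
  simp [dg, add_mul, Finset.sum_add_distrib]

theorem dg_single (δ : ε → σ → ℕ) (e : ε) (x : σ) [DecidableEq ε] :
    dg δ (fun e' => if e' = e then 1 else 0) x = δ e x := by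
  simp [dg]

def PN (δ : ε → σ → ℕ) (s : ℕ) (c : σ → ℕ) (a : σ → ℕ) : Prop :=
  ∃ E : ε → ℕ, ∑ e, E e = s ∧ ∀ x, dg δ E x + c x ≤ a x

theorem exists_edge (δ : ε → σ → ℕ) (hδ : ∀ e z, 0 < δ e z → ∃ y, ∀ x, δ e x = ind z x + ind y x)
    (E F : ε → ℕ) (z : σ) (h : dg δ F z < dg δ E z) :
    ∃ e y, F e < E e ∧ ∀ x, δ e x = ind z x + ind y x := by
  obtain ⟨e, -, he⟩ := Finset.exists_lt_of_sum_lt h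
  have h1 : 0 < δ e z := by
    rcases Nat.eq_zero_or_pos (δ e z) with h | h
    · simp [h] at he
    · exact h
  obtain ⟨y, hy⟩ := hδ e z h1
  exact ⟨e, y, lt_of_mul_lt_mul_right he (Nat.zero_le _), hy⟩

theorem gallai (δ : ε → σ → ℕ) (hδ : ∀ e z, 0 < δ e z → ∃ y, ∀ x, δ e x = ind z x + ind y x)
    (r : ℕ) (a : σ → ℕ) (hn : ¬ PN δ (r+1) 0 a) (u v w : σ)
    (hv : PN δ r (ind v) a) (huw : PN δ r (fun x => ind u x + ind w x) a) :
    PN δ r (fun x => ind u x + ind v x) a ∨ PN δ r (fun x => ind v x + ind w x) a := by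
  classical
  obtain ⟨F, hF, hFa⟩ := hv
  obtain ⟨E, hE, hEa⟩ := huw
  let Inv : ℕ → Prop := fun n => ∃ A B : ε → ℕ, ∃ z, ∑ e, A e = n ∧ ∑ e, B e = n ∧
    (∀ e, 0 < A e → F e + A e ≤ E e) ∧ (∀ e, 0 < B e → E e + B e ≤ F e) ∧
    (∀ x, dg δ A x + ind z x = dg δ B x + ind v x)
  have h0 : Inv 0 := ⟨0, 0, v, by simp, by simp, by simp, by simp, by simp⟩
  have hb : ∀ n, Inv n → n ≤ r := by
    rintro n ⟨A, B, z, hA, -, hAE, -, -⟩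
    rw [← hA, ← hE]
    apply Finset.sum_le_sum
    intro e _
    have := hAE e
    omega
  obtain ⟨n, hn1, hmax⟩ : ∃ n, Inv n ∧ ¬ Inv (n+1) := by
    by_contra hc
    push Not at hc
    have : ∀ n, Inv n := fun n => Nat.rec h0 (fun n ih => hc n ih) n
    have := hb _ (this (r+1))
    omega
  obtain ⟨A, B, z, hA, hB, hAE, hBF, hAB⟩ := hn1
  -- E2 = E - A + B
  obtain ⟨E2, hE2⟩ : ∃ E2 : ε → ℕ, ∀ e, E2 e + A e = E e + B e :=
    ⟨fun e => E e + B e - A e, fun e => by have := hAE e; simp only; omega⟩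
  obtain ⟨F2, hF2⟩ : ∃ F2 : ε → ℕ, ∀ e, F2 e + B e = F e + A e :=
    ⟨fun e => F e + A e - B e, fun e => by have := hBF e; simp only; omega⟩
  have sE2 : ∑ e, E2 e = r := by
    have := Finset.sum_congr rfl (fun e (_ : e ∈ Finset.univ) => hE2 e)
    simp only [Finset.sum_add_distrib] at this
    omega
  have sF2 : ∑ e, F2 e = r := by
    have := Finset.sum_congr rfl (fun e (_ : e ∈ Finset.univ) => hF2 e)
    simp only [Finset.sum_add_distrib] at this
    omega
  have dE2 : ∀ x, dg δ E2 x + ind v x = dg δ E x + ind z x := by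
    intro x
    have := congrArg (fun G => dg δ G x) (funext hE2)
    simp only [dg_add] at this
    have := hAB x
    omega
  have dF2 : ∀ x, dg δ F2 x + ind z x = dg δ F x + ind v x := by
    intro x
    have := congrArg (fun G => dg δ G x) (funext hF2)
    simp only [dg_add] at this
    have := hAB x
    omega
  by_cases hzu : z = u
  · right
    refine ⟨E2, sE2, fun x => ?_⟩
    have := dE2 x; have := hEa x
    subst hzu; simp only at *; omega
  by_cases hzw : z = w
  · left
    refine ⟨E2, sE2, fun x => ?_⟩
    have := dE2 x; have := hEa x
    subst hzw; simp only at *; omega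
  by_cases hz : dg δ E z < a z
  · left
    refine ⟨E2, sE2, fun x => ?_⟩
    have h1 := dE2 x; have h2 := hEa x
    by_cases hx : x = z
    · subst hx
      simp [ind, hzu, hzw] at *
      omega
    · have : ind z x = 0 := by simp [ind, hx]
      simp only at *; omega
  have hz1 : dg δ F2 z < dg δ E z := by
    have h1 := dF2 z; have h2 := hFa z
    have : ind z z = 1 := by simp [ind]
    omega
  obtain ⟨e, y, he, hey⟩ := exists_edge δ hδ E F2 z hz1
  by_cases hy : dg δ F y + ind v y < a y
  · exfalso
    apply hn
    refine ⟨fun e' => F2 e' + if e' = e then 1 else 0, ?_, fun x => ?_⟩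
    · simp [Finset.sum_add_distrib, sF2]
    · rw [dg_add, dg_single, hey]
      have h1 := dF2 x; have h2 := hFa x
      by_cases hx : x = y
      · subst hx
        have : ind x x = 1 := by simp [ind]
        simp only [Pi.zero_apply]; omega
      · have : ind y x = 0 := by simp [ind, hx]
        simp only [Pi.zero_apply]; omega
  obtain ⟨A', hA'⟩ : ∃ A' : ε → ℕ, A' = fun e' => A e' + if e' = e then 1 else 0 := ⟨_, rfl⟩
  have hA'E : ∀ e', 0 < A' e' → F e' + A' e' ≤ E e' := by
    intro e' h
    have h1 := hAE e'
    have h2 := hBF e'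
    have h3 := hF2 e'
    by_cases hh : e' = e
    · subst hh; simp [hA'] at *; omega
    · simp [hA', hh] at *; omega
  have dA' : ∀ x, dg δ A' x = dg δ A x + ind z x + ind y x := by
    intro x
    rw [hA', dg_add, dg_single, hey]; omega
  obtain ⟨E3, hE3⟩ : ∃ E3 : ε → ℕ, ∀ e, E3 e + A' e = E e + B e :=
    ⟨fun e => E e + B e - A' e, fun e => by have := hA'E e; simp only; omega⟩
  have dE3 : ∀ x, dg δ E3 x + ind v x + ind y x = dg δ E x := by
    intro x
    have := congrArg (fun G => dg δ G x) (funext hE3)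
    simp only [dg_add] at this
    have := hAB x
    have := dA' x
    omega
  have hy1 : dg δ E3 y < dg δ F y := by
    have h1 := dE3 y; have h2 := hEa y
    have : ind y y = 1 := by simp [ind]
    omega
  obtain ⟨e2, z', he2, hez⟩ := exists_edge δ hδ F E3 y hy1
  exfalso
  apply hmax
  refine ⟨A', fun e' => B e' + if e' = e2 then 1 else 0, z', ?_, ?_, hA'E, ?_, fun x => ?_⟩
  · simp [hA', Finset.sum_add_distrib, hA]
  · simp [Finset.sum_add_distrib, hB]
  · intro e' h
    have h1 := hA'E e'
    have h2 := hBF e'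
    have h3 := hE3 e'
    by_cases hh : e' = e2
    · subst hh; simp at *; omega
    · simp [hh] at *; omega
  · rw [dA', dg_add, dg_single, hez]
    have := hAB x
    omega

/-- remove an edge at i -/
theorem remove_edge (δ : ε → σ → ℕ) (hδ : ∀ e z, 0 < δ e z → ∃ y, ∀ x, δ e x = ind z x + ind y x)
    (E : ε → ℕ) (z : σ) (h : 0 < dg δ E z) :
    ∃ e y, (∀ x, δ e x = ind z x + ind y x) ∧ ∃ E' : ε → ℕ, ∑ e, E e = ∑ e, E' e + 1 ∧
      ∀ x, dg δ E x = dg δ E' x + ind z x + ind y x := by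
  classical
  obtain ⟨e, y, he, hy⟩ := exists_edge δ hδ E 0 z (by simpa [dg] using h)
  obtain ⟨E', hE'⟩ : ∃ E' : ε → ℕ, E = fun e' => E' e' + if e' = e then 1 else 0 := by
    refine ⟨fun e' => E e' - if e' = e then 1 else 0, funext fun e' => ?_⟩
    by_cases hh : e' = e
    · subst hh; simp at *; omega
    · simp [hh]
  refine ⟨e, y, hy, E', ?_, fun x => ?_⟩
  · rw [hE']; simp [Finset.sum_add_distrib]
  · rw [hE', dg_add, dg_single, hy]; omega

theorem PN_anti (δ : ε → σ → ℕ) (s : ℕ) (c a : σ → ℕ) (h : PN δ (s+1) c a) : PN δ s c a := by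
  classical
  obtain ⟨E, hE, hEa⟩ := h
  obtain ⟨e, -, he⟩ : ∃ e ∈ Finset.univ, E e ≠ 0 := by
    apply Finset.exists_ne_zero_of_sum_ne_zero; omega
  obtain ⟨E', hE'⟩ : ∃ E' : ε → ℕ, E = fun e' => E' e' + if e' = e then 1 else 0 := by
    refine ⟨fun e' => E e' - if e' = e then 1 else 0, funext fun e' => ?_⟩
    by_cases hh : e' = e
    · subst hh; simp at *; omega
    · simp [hh]
  refine ⟨E', ?_, fun x => ?_⟩
  · rw [hE'] at hE; simp [Finset.sum_add_distrib] at hE; exact hE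
  · have := hEa x
    rw [hE', dg_add] at this; omega

theorem PN_anti' (δ : ε → σ → ℕ) {s t : ℕ} (hst : s ≤ t) (c a : σ → ℕ) (h : PN δ t c a) :
    PN δ s c a := by
  induction hst with
  | refl => exact h
  | step _ ih => exact ih (PN_anti _ _ _ _ h)

theorem le_or_pos (δ : ε → σ → ℕ) (E : ε → ℕ) (c a : σ → ℕ) (i : σ)
    (h : ∀ x, dg δ E x + c x ≤ a x + ind i x) :
    0 < dg δ E i ∨ (c i = 0 → ∀ x, dg δ E x + c x ≤ a x) := by
  by_cases h0 : 0 < dg δ E i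
  · exact Or.inl h0
  · right
    intro hc x
    have := h x
    by_cases hx : x = i
    · subst hx; omega
    · simp [ind, hx] at this; omega

theorem PN_red (δ : ε → σ → ℕ) (hδ : ∀ e z, 0 < δ e z → ∃ y, ∀ x, δ e x = ind z x + ind y x)
    (s : ℕ) (a : σ → ℕ) (i : σ) (h : PN δ (s+1) 0 (fun x => a x + ind i x)) : PN δ s 0 a := by
  obtain ⟨E, hE, hEa⟩ := h
  rcases le_or_pos δ E 0 a i hEa with h | h
  · obtain ⟨e, y, -, E', h1, h2⟩ := remove_edge δ hδ E i h
    refine ⟨E', by omega, fun x => ?_⟩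
    have := hEa x; have := h2 x; simp only [Pi.zero_apply] at *; omega
  · exact PN_anti _ _ _ _ ⟨E, hE, h rfl⟩

theorem exists_nbr (δ : ε → σ → ℕ) (hδ : ∀ e z, 0 < δ e z → ∃ y, ∀ x, δ e x = ind z x + ind y x)
    (r : ℕ) (c a : σ → ℕ) (hn : ¬ PN δ (r+1) 0 a) (i : σ)
    (h : PN δ (r+1) c (fun x => a x + ind i x)) :
    ∃ e y, (∀ x, δ e x = ind i x + ind y x) ∧ PN δ r (fun x => c x + ind y x) a := by
  obtain ⟨E, hE, hEa⟩ := h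
  rcases le_or_pos δ E 0 a i (fun x => by have := hEa x; simp only [Pi.zero_apply] at *; omega) with h | h
  · obtain ⟨e, y, he, E', h1, h2⟩ := remove_edge δ hδ E i h
    refine ⟨e, y, he, E', by omega, fun x => ?_⟩
    have := hEa x; have := h2 x; simp only at *; omega
  · exact absurd ⟨E, hE, h rfl⟩ hn

theorem persist (δ : ε → σ → ℕ) (hδ : ∀ e z, 0 < δ e z → ∃ y, ∀ x, δ e x = ind z x + ind y x)
    (r : ℕ) (a : σ → ℕ) (hn : ¬ PN δ (r+1) 0 a)
    (h : ∀ i, PN δ (r+1) 0 (fun x => a x + ind i x)) :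
    ∃ a', ¬ PN δ (r+2) 0 a' ∧ ∀ i, PN δ (r+2) 0 (fun x => a' x + ind i x) := by
  classical
  rcases isEmpty_or_nonempty σ with hs | ⟨⟨i0⟩⟩
  · exact ⟨a, fun h => hn (PN_anti _ _ _ _ h), fun i => isEmptyElim i⟩
  obtain ⟨_, d, -, hd⟩ := exists_nbr δ hδ r _ a hn i0 (h i0)
  obtain ⟨e, d2, he, hd2⟩ := exists_nbr δ hδ r _ a hn d (h d)
  have hd' : PN δ r (ind d) a := by simpa using hd
  have hd2' : PN δ r (ind d2) a := by simpa using hd2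
  have key : ∀ e i j, (∀ x, δ e x = ind i x + ind j x) →
      ¬ PN δ r (fun x => ind i x + ind j x) a := by
    rintro e i j he ⟨E, hE, hEa⟩
    apply hn
    refine ⟨fun e' => E e' + if e' = e then 1 else 0, ?_, fun x => ?_⟩
    · simp [Finset.sum_add_distrib, hE]
    · rw [dg_add, dg_single, he]
      simpa using hEa x
  refine ⟨fun x => a x + ind d x + ind d2 x, ?_, fun i => ?_⟩
  · intro hP
    obtain ⟨E, hE, hEa⟩ := hP
    rcases le_or_pos δ E 0 (fun x => a x + ind d2 x) d
      (fun x => by have := hEa x; simp only at *; omega) with hp | hp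
    · obtain ⟨e1, u, he1, E', h1, h2⟩ := remove_edge δ hδ E d hp
      have : PN δ (r+1) (ind u) (fun x => a x + ind d2 x) :=
        ⟨E', by omega, fun x => by
          have := hEa x; have := h2 x; simp only [Pi.zero_apply] at *; omega⟩
      obtain ⟨e2, w, he2, huw⟩ := exists_nbr δ hδ r _ a hn d2 this
      rcases gallai δ hδ r a hn u d w hd' huw with h3 | h3
      · exact key e1 u d (fun x => by rw [he1, add_comm]) h3
      · rcases gallai δ hδ r a hn d d2 w hd2' h3 with h4 | h4
        · exact key e d d2 he h4
        · exact key e2 d2 w he2 h4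
    · exact hn (PN_red δ hδ _ _ d2 ⟨E, hE, hp rfl⟩)
  · obtain ⟨E, hE, hEa⟩ := h i
    refine ⟨fun e' => E e' + if e' = e then 1 else 0, ?_, fun x => ?_⟩
    · simp [Finset.sum_add_distrib, hE]
    · rw [dg_add, dg_single, he]
      have := hEa x
      simp only [Pi.zero_apply] at *
      omega

theorem persist' (δ : ε → σ → ℕ) (hδ : ∀ e z, 0 < δ e z → ∃ y, ∀ x, δ e x = ind z x + ind y x)
    (s t : ℕ) (hs : 1 ≤ s) (hst : s ≤ t)
    (h : ∃ a, ¬ PN δ s 0 a ∧ ∀ i, PN δ s 0 (fun x => a x + ind i x)) :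
    ∃ a, ¬ PN δ t 0 a ∧ ∀ i, PN δ t 0 (fun x => a x + ind i x) := by
  induction t, hst using Nat.le_induction with
  | base => exact h
  | succ m hm ih =>
    obtain ⟨a, h1, h2⟩ := ih
    obtain ⟨r, rfl⟩ : ∃ r, m = r + 1 := ⟨m - 1, by omega⟩
    exact persist δ hδ r a h1 h2


section two
variable {τ Y : Type} [Fintype Y] [DecidableEq τ] [DecidableEq Y]

theorem PN_sum (δ : ε → σ → ℕ) (δ' : ε ⊕ Y → τ → ℕ) (φ : σ ⊕ Y ≃ τ)
    (h1 : ∀ e x, δ' (Sum.inl e) (φ (Sum.inl x)) = δ e x)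
    (h2 : ∀ e y, δ' (Sum.inl e) (φ (Sum.inr y)) = 0)
    (h3 : ∀ y x, δ' (Sum.inr y) (φ (Sum.inl x)) = 0)
    (h4 : ∀ y y', δ' (Sum.inr y) (φ (Sum.inr y')) = if y = y' then 1 else 0)
    (t : ℕ) (b : τ → ℕ) :
    PN δ' t 0 b ↔ PN δ (t - ∑ y, b (φ (Sum.inr y))) 0 (fun x => b (φ (Sum.inl x))) := by
  have d1 : ∀ (E : ε ⊕ Y → ℕ) x, dg δ' E (φ (Sum.inl x)) = dg δ (fun e => E (Sum.inl e)) x := by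
    intro E x; simp [dg, Fintype.sum_sum_type, h1, h3]
  have d2 : ∀ (E : ε ⊕ Y → ℕ) y, dg δ' E (φ (Sum.inr y)) = E (Sum.inr y) := by
    intro E x; simp [dg, Fintype.sum_sum_type, h2, h4]
  constructor
  · rintro ⟨E, hE, hEb⟩
    rw [Fintype.sum_sum_type] at hE
    have hs : ∑ y, E (Sum.inr y) ≤ ∑ y, b (φ (Sum.inr y)) := by
      apply Finset.sum_le_sum
      intro y _
      have := hEb (φ (Sum.inr y))
      rw [d2] at this
      simpa using this
    refine PN_anti' δ (t := ∑ e, E (Sum.inl e)) (by omega) _ _ ⟨_, rfl, fun x => ?_⟩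
    rw [← d1]
    exact hEb _
  · rintro ⟨E, hE, hEb⟩
    refine PN_anti' δ' (t := ∑ e, E e + ∑ y, b (φ (Sum.inr y))) (by omega) _ _
      ⟨Sum.elim E (fun y => b (φ (Sum.inr y))), ?_, fun x => ?_⟩
    · simp [Fintype.sum_sum_type]
    · obtain ⟨s, rfl⟩ := φ.surjective x
      rcases s with x | y
      · rw [d1]; exact hEb x
      · rw [d2]; simp

theorem comb_main (δ : ε → σ → ℕ) (δ' : ε ⊕ Y → τ → ℕ) (φ : σ ⊕ Y ≃ τ)
    (hδ : ∀ e z, 0 < δ e z → ∃ y, ∀ x, δ e x = ind z x + ind y x)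
    (h1 : ∀ e x, δ' (Sum.inl e) (φ (Sum.inl x)) = δ e x)
    (h2 : ∀ e y, δ' (Sum.inl e) (φ (Sum.inr y)) = 0)
    (h3 : ∀ y x, δ' (Sum.inr y) (φ (Sum.inl x)) = 0)
    (h4 : ∀ y y', δ' (Sum.inr y) (φ (Sum.inr y')) = if y = y' then 1 else 0)
    (t : ℕ) (y0 : Y) :
    (∃ b, ¬ PN δ' t 0 b ∧ ∀ i, PN δ' t 0 (fun x => b x + ind i x)) ↔
    (∃ a, ¬ PN δ t 0 a ∧ ∀ i, PN δ t 0 (fun x => a x + ind i x)) := by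
  simp only [PN_sum δ δ' φ h1 h2 h3 h4]
  have i1 : ∀ x x', ind (φ (Sum.inl x)) (φ (Sum.inl x')) = ind x x' := by
    intro x x'; simp [ind]
  have i2 : ∀ x y, ind (φ (Sum.inl x)) (φ (Sum.inr y)) = 0 := by
    intro x x'; simp [ind]
  have i3 : ∀ y x, ind (φ (Sum.inr y)) (φ (Sum.inl x)) = 0 := by
    intro x x'; simp [ind]
  have i4 : ∀ y, ∑ y', ind (φ (Sum.inr y)) (φ (Sum.inr y')) = 1 := by
    intro x; simp [ind]
  have P0 : ∀ a, PN δ 0 0 a := fun a => ⟨0, by simp, by simp [dg]⟩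
  constructor
  · rintro ⟨b, hb, hi⟩
    refine persist' δ hδ (t - ∑ y, b (φ (Sum.inr y))) t ?_ (by omega)
      ⟨fun x => b (φ (Sum.inl x)), hb, fun i => ?_⟩
    · by_contra hc
      rw [show t - ∑ y, b (φ (Sum.inr y)) = 0 by omega] at hb
      exact hb (P0 _)
    · have := hi (φ (Sum.inl i))
      simpa [i1, i2] using this
  · rintro ⟨a, ha, hi⟩
    obtain ⟨s, hs, hs'⟩ : ∃ s, PN δ s 0 a ∧ ¬ PN δ (s+1) 0 a := by
      by_contra hc
      push Not at hc
      exact ha (Nat.rec (P0 a) (fun n ih => hc n ih) t)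
    have hst : s + 1 ≤ t := by
      by_contra hc
      exact ha (PN_anti' δ (by omega) _ _ hs)
    refine ⟨fun z => Sum.elim a (fun y => if y = y0 then t - 1 - s else 0) (φ.symm z), ?_, ?_⟩
    · simpa [show t - (t - 1 - s) = s + 1 by omega] using hs'
    · intro z
      obtain ⟨z, rfl⟩ := φ.surjective z
      rcases z with x | y
      · simp only [Equiv.symm_apply_apply, Sum.elim_inr, Sum.elim_inl, i1, i2, add_zero,
          Finset.sum_ite_eq', Finset.mem_univ, if_true,
          show t - (t - 1 - s) = s + 1 by omega]
        exact PN_anti' δ hst _ _ (hi x)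
      · simp only [Equiv.symm_apply_apply, Sum.elim_inr, Sum.elim_inl, i3, add_zero,
          Finset.sum_ite_eq', Finset.mem_univ, if_true, Finset.sum_add_distrib, i4,
          show t - (t - 1 - s + 1) = s by omega]
        exact hs
end two

section alg
open MvPolynomial

theorem pow_span {k : Type} [Field k] (g : ε → σ →₀ ℕ) (t : ℕ) :
    (Ideal.span (Set.range fun e => (monomial (g e) (1 : k)))) ^ t =
      Ideal.span ((fun s => monomial s (1 : k)) ''
        {d | ∃ E : ε → ℕ, ∑ e, E e = t ∧ d = ∑ e, E e • g e}) := by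
  classical
  induction t with
  | zero =>
    rw [pow_zero, Ideal.one_eq_top, eq_comm, Ideal.eq_top_iff_one]
    apply Ideal.subset_span
    exact ⟨0, ⟨0, by simp, by simp⟩, by simp⟩
  | succ t ih =>
    rw [pow_succ, ih, Ideal.span_mul_span']
    congr 1
    ext f
    simp only [Set.mem_mul, Set.mem_image, Set.mem_range, Set.mem_setOf_eq]
    constructor
    · rintro ⟨_, ⟨_, ⟨E, hE, rfl⟩, rfl⟩, _, ⟨e, rfl⟩, rfl⟩
      refine ⟨_, ⟨fun e' => E e' + if e' = e then 1 else 0, ?_, rfl⟩, ?_⟩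
      · simp [Finset.sum_add_distrib, hE]
      · simp [monomial_mul, add_smul, Finset.sum_add_distrib]
    · rintro ⟨_, ⟨E, hE, rfl⟩, rfl⟩
      obtain ⟨e, -, he⟩ : ∃ e ∈ Finset.univ, E e ≠ 0 := by
        apply Finset.exists_ne_zero_of_sum_ne_zero; omega
      obtain ⟨E', rfl⟩ : ∃ E' : ε → ℕ, E = fun e' => E' e' + if e' = e then 1 else 0 := by
        refine ⟨fun e' => E e' - if e' = e then 1 else 0, funext fun e' => ?_⟩
        by_cases hh : e' = e
        · subst hh; simp at *; omega
        · simp [hh]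
      refine ⟨_, ⟨_, ⟨E', ?_, rfl⟩, rfl⟩, _, ⟨e, rfl⟩, ?_⟩
      · simpa [Finset.sum_add_distrib] using hE
      · simp [monomial_mul, add_smul, Finset.sum_add_distrib]

theorem mem_pow_span {k : Type} [Field k] (g : ε → σ →₀ ℕ) (t : ℕ) (f : MvPolynomial σ k) :
    f ∈ (Ideal.span (Set.range fun e => (monomial (g e) (1 : k)))) ^ t ↔
      ∀ a ∈ f.support, PN (fun e x => g e x) t 0 a := by
  rw [pow_span, mem_ideal_span_monomial_image]
  refine forall₂_congr fun a _ => ?_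
  constructor
  · rintro ⟨_, ⟨E, hE, rfl⟩, h⟩
    refine ⟨E, hE, fun x => ?_⟩
    simpa [dg, Finsupp.finset_sum_apply] using h x
  · rintro ⟨E, hE, h⟩
    refine ⟨_, ⟨E, hE, rfl⟩, fun x => ?_⟩
    simpa [dg, Finsupp.finset_sum_apply] using h x

theorem ass_iff {k : Type} [Field k] [Finite σ] (g : ε → σ →₀ ℕ) (t : ℕ)
    (I : Ideal (MvPolynomial σ k))
    (hI : I = Ideal.span (Set.range fun e => (monomial (g e) (1 : k)))) :
    Ideal.span (Set.range (X : σ → MvPolynomial σ k)) ∈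
      associatedPrimes (MvPolynomial σ k) (MvPolynomial σ k ⧸ I ^ t) ↔
    ∃ a : σ → ℕ, ¬ PN (fun e x => g e x) t 0 a ∧
      ∀ i, PN (fun e x => g e x) t 0 (fun x => a x + ind i x) := by
  have hmax : (Ideal.span (Set.range (X : σ → MvPolynomial σ k))).IsMaximal := by
    have : Ideal.span (Set.range (X : σ → MvPolynomial σ k)) =
        RingHom.ker (constantCoeff : MvPolynomial σ k →+* k) := by
      ext f
      rw [← Set.image_univ, mem_ideal_span_X_image, RingHom.mem_ker, constantCoeff_eq]
      constructor
      · intro h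
        by_contra hc
        obtain ⟨i, -, hi⟩ := h 0 (mem_support_iff.2 hc)
        simp at hi
      · intro h m hm
        by_contra hc
        push Not at hc
        have : m = 0 := Finsupp.ext fun i => hc i trivial
        rw [mem_support_iff, this] at hm
        exact hm h
    rw [this]
    exact RingHom.ker_isMaximal_of_surjective _ fun c => ⟨C c, by simp⟩
  rw [AssociatedPrimes.mem_iff, isAssociatedPrime_iff]
  have hcol : ∀ f h : MvPolynomial σ k, h ∈ Submodule.colon (⊥ : Submodule (MvPolynomial σ k)
      (MvPolynomial σ k ⧸ I ^ t)) {Ideal.Quotient.mk (I ^ t) f} ↔ h * f ∈ I ^ t := by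
    intro f h
    rw [Submodule.mem_colon_singleton, Submodule.mem_bot, ← Ideal.Quotient.eq_zero_iff_mem,
      map_mul]
    rfl
  constructor
  · rintro ⟨hP, x, hx⟩
    obtain ⟨f, rfl⟩ := Ideal.Quotient.mk_surjective x
    have hf : f ∉ I ^ t := by
      intro hf
      apply hP.ne_top
      rw [hx, Ideal.eq_top_iff_one, hcol, one_mul]
      exact hf
    have hXf : ∀ i, X i * f ∈ I ^ t := by
      intro i
      rw [← hcol, ← hx]
      exact Ideal.subset_span ⟨i, rfl⟩
    rw [hI, mem_pow_span] at hf
    push Not at hf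
    obtain ⟨a, ha, hna⟩ := hf
    refine ⟨a, hna, fun i => ?_⟩
    have h1 := hXf i
    rw [hI, mem_pow_span] at h1
    have h2 := h1 (Finsupp.single i 1 + a) (by
      rw [mem_support_iff, coeff_X_mul]; exact mem_support_iff.1 ha)
    convert h2 using 1
    ext x
    simp only [Finsupp.add_apply, Finsupp.single_apply, ind, eq_comm, add_comm]
  · rintro ⟨a, ha, hi⟩
    let a' : σ →₀ ℕ := Finsupp.equivFunOnFinite.symm a
    refine ⟨hmax.isPrime, Ideal.Quotient.mk (I ^ t) (monomial a' 1), ?_⟩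
    apply hmax.eq_of_le
    · rw [Ne, Ideal.eq_top_iff_one, hcol, one_mul, hI, mem_pow_span]
      intro h
      exact ha (h a' (by simp))
    · rw [Ideal.span_le]
      rintro _ ⟨i, rfl⟩
      rw [SetLike.mem_coe, hcol, hI, mem_pow_span]
      intro b hb
      rw [X, monomial_mul, mul_one] at hb
      have hb' : b = Finsupp.single i 1 + a' := by simpa using support_monomial_subset hb
      convert hi i using 1
      ext x
      simp only [hb', Finsupp.add_apply, Finsupp.single_apply, ind, eq_comm, add_comm]
      exact add_comm _ _

end alg

end Gal

theorem idealV_eq (k : Type) [Field k] (n : ℕ) (Γ : SimpleGraph (Fin n)) (v : Fin n)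
    (ι : ((closedNbhd Γ v)ᶜ : Set (Fin n)) → { i : Fin n // i ≠ v })
    (hι : ∀ x, (ι x : Fin n) = x) :
    idealV k (edgeIdeal k Γ) v = Ideal.span (Set.range fun e :
      {p : ((closedNbhd Γ v)ᶜ : Set (Fin n)) × ((closedNbhd Γ v)ᶜ : Set (Fin n)) //
        Γ.Adj p.1 p.2} ⊕ {y : { i : Fin n // i ≠ v } // Γ.Adj v y} =>
      monomial (Sum.elim (fun p => Finsupp.single (ι p.1.1) 1 + Finsupp.single (ι p.1.2) 1)
        (fun y => Finsupp.single y.1 1) e) (1 : k)) := by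
  classical
  set K := Ideal.span (Set.range fun e :
      {p : ((closedNbhd Γ v)ᶜ : Set (Fin n)) × ((closedNbhd Γ v)ᶜ : Set (Fin n)) //
        Γ.Adj p.1 p.2} ⊕ {y : { i : Fin n // i ≠ v } // Γ.Adj v y} =>
      monomial (Sum.elim (fun p => Finsupp.single (ι p.1.1) 1 + Finsupp.single (ι p.1.2) 1)
        (fun y => Finsupp.single y.1 1) e) (1 : k)) with hK
  have hY : ∀ y : { i : Fin n // i ≠ v }, Γ.Adj v y → (X y : Rv k v) ∈ K := by
    intro y hy
    exact Ideal.subset_span ⟨Sum.inr ⟨y, hy⟩, rfl⟩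
  have hE : ∀ i j : { i : Fin n // i ≠ v }, Γ.Adj i j → (X i * X j : Rv k v) ∈ K := by
    intro i j hij
    by_cases hi : Γ.Adj v i
    · exact K.mul_mem_right _ (hY i hi)
    by_cases hj : Γ.Adj v j
    · exact K.mul_mem_left _ (hY j hj)
    have hi' : (i : Fin n) ∈ (closedNbhd Γ v)ᶜ := by
      simp [closedNbhd, hi, i.2]
    have hj' : (j : Fin n) ∈ (closedNbhd Γ v)ᶜ := by
      simp [closedNbhd, hj, j.2]
    refine Ideal.subset_span ⟨Sum.inl ⟨(⟨i, hi'⟩, ⟨j, hj'⟩), hij⟩, ?_⟩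
    have e1 : ι ⟨i, hi'⟩ = i := Subtype.ext (hι _)
    have e2 : ι ⟨j, hj'⟩ = j := Subtype.ext (hι _)
    simp [e1, e2, X, monomial_mul]
  apply le_antisymm
  · -- retraction
    let ρ : MvPolynomial (Fin n) k →+* Rv k v :=
      (aeval (fun i => if h : i = v then (1 : Rv k v) else X ⟨i, h⟩)).toRingHom
    have hρv : ρ (X v) = 1 := by simp [ρ]
    have hρ : ∀ i : { i : Fin n // i ≠ v }, ρ (X i.1) = X i := by
      intro i; simp [ρ, i.2]
    let ψ : LocAway k v →+* Rv k v := IsLocalization.Away.lift (X v : MvPolynomial (Fin n) k)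
      (g := ρ) (by rw [hρv]; exact isUnit_one)
    have hψ : ψ.comp (algebraMap (MvPolynomial (Fin n) k) (LocAway k v)) = ρ :=
      IsLocalization.Away.lift_comp _ _
    have hle : (edgeIdeal k Γ).map (algebraMap (MvPolynomial (Fin n) k) (LocAway k v)) ≤
        K.comap ψ := by
      rw [Ideal.map_le_iff_le_comap, Ideal.comap_comap, hψ, edgeIdeal, Ideal.span_le]
      rintro _ ⟨i, j, hij, rfl⟩
      rw [SetLike.mem_coe, Ideal.mem_comap, map_mul]
      by_cases hi : i = v
      · subst hi
        rw [hρv, one_mul]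
        have := hρ ⟨j, hij.ne'⟩
        simp only at this
        rw [this]
        exact hY _ hij
      by_cases hj : j = v
      · subst hj
        rw [hρv, mul_one]
        have := hρ ⟨i, hi⟩
        simp only at this
        rw [this]
        exact hY _ hij.symm
      have h1 := hρ ⟨i, hi⟩
      have h2 := hρ ⟨j, hj⟩
      simp only at h1 h2
      rw [h1, h2]
      exact hE _ _ hij
    intro f hf
    have h1 := hle hf
    rw [Ideal.mem_comap, RingHom.comp_apply, ← RingHom.comp_apply ψ, hψ] at h1
    have h2 : (ρ.comp (MvPolynomial.rename
        (Subtype.val : { i : Fin n // i ≠ v } → Fin n)).toRingHom : Rv k v →+* Rv k v) =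
        RingHom.id _ := by
      apply MvPolynomial.ringHom_ext
      · intro c; simp [ρ]
      · intro i; simp [ρ, i.2]
    have h3 := congrArg (fun h => h f) h2
    simp only [RingHom.comp_apply, RingHom.id_apply] at h3
    rw [h3] at h1
    exact h1
  · rw [hK, Ideal.span_le]
    rintro _ ⟨e, rfl⟩
    rw [SetLike.mem_coe, idealV, Ideal.mem_comap, RingHom.comp_apply]
    rcases e with ⟨⟨i, j⟩, hij⟩ | ⟨y, hy⟩
    · apply Ideal.mem_map_of_mem
      apply Ideal.subset_span
      refine ⟨i, j, hij, ?_⟩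
      simp [rename_monomial, Finsupp.mapDomain_add, Finsupp.mapDomain_single, hι, X, monomial_mul]
    · have hu : IsUnit (algebraMap (MvPolynomial (Fin n) k) (LocAway k v) (X v)) :=
        IsLocalization.Away.algebraMap_isUnit _
      rw [← Ideal.unit_mul_mem_iff_mem _ hu, ← map_mul]
      apply Ideal.mem_map_of_mem
      apply Ideal.subset_span
      refine ⟨v, y, hy, ?_⟩
      simp [rename_monomial, Finsupp.mapDomain_single, X]

/-- For a vertex `v` and `t ≥ 1`: the maximal graded ideal of
`R_v = k[x_i : i ≠ v]` is an associated prime of `R_v / I_v^t` if and only if the maximal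
graded ideal of `S = k[x_i : i ∉ N[v]]` is an associated prime of `S / J^t`, where `J` is
the edge ideal of the induced subgraph `Γ_{V ∖ N[v]}`. -/
theorem stmt1 (k : Type) [Field k] (n : ℕ) (Γ : SimpleGraph (Fin n))
    (hiso : NoIsolated Γ) (v : Fin n) (t : ℕ) (ht : 1 ≤ t) :
    (maxIdeal k { i : Fin n // i ≠ v } ∈
        associatedPrimes (Rv k v) (Rv k v ⧸ (idealV k (edgeIdeal k Γ) v) ^ t)) ↔
      (maxIdeal k ((closedNbhd Γ v)ᶜ : Set (Fin n)) ∈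
        associatedPrimes (MvPolynomial ((closedNbhd Γ v)ᶜ : Set (Fin n)) k)
          (MvPolynomial ((closedNbhd Γ v)ᶜ : Set (Fin n)) k ⧸
            (edgeIdealOn k Γ ((closedNbhd Γ v)ᶜ)) ^ t)) := by
  classical
  let U : Set (Fin n) := (closedNbhd Γ v)ᶜ
  have hU : ∀ x : U, (x : Fin n) ≠ v ∧ ¬ Γ.Adj v x := by
    rintro ⟨x, hx⟩
    simpa [U, closedNbhd] using hx
  let ι : U → { i : Fin n // i ≠ v } := fun x => ⟨x, (hU x).1⟩
  have hιinj : Function.Injective ι := by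
    intro x y h
    exact Subtype.ext (congrArg (fun z : { i : Fin n // i ≠ v } => (z : Fin n)) h)
  let Y := {y : { i : Fin n // i ≠ v } // Γ.Adj v y}
  let ε := {p : U × U // Γ.Adj p.1 p.2}
  have hdis : ∀ (x : U) (y : Y), ι x ≠ y.1 := by
    intro x y h
    apply (hU x).2
    have := y.2
    rw [← h] at this
    exact this
  let φ : U ⊕ Y ≃ { i : Fin n // i ≠ v } := Equiv.ofBijective (Sum.elim ι Subtype.val) (by
    constructor
    · rintro (x | x) (y | y) h
      · exact congrArg _ (hιinj h)
      · exact absurd h (hdis x y)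
      · exact absurd h.symm (hdis y x)
      · exact congrArg _ (Subtype.ext h)
    · intro z
      by_cases hz : Γ.Adj v z
      · exact ⟨Sum.inr ⟨z, hz⟩, rfl⟩
      · exact ⟨Sum.inl ⟨z, by simp [U, closedNbhd, hz, z.2]⟩, rfl⟩)
  have hφ1 : ∀ x, φ (Sum.inl x) = ι x := fun _ => rfl
  have hφ2 : ∀ y, φ (Sum.inr y) = y.1 := fun _ => rfl
  obtain ⟨u, hu⟩ := hiso v
  let y0 : Y := ⟨⟨u, hu.ne'⟩, hu⟩
  let g : ε → U →₀ ℕ := fun p => Finsupp.single p.1.1 1 + Finsupp.single p.1.2 1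
  have hJ : edgeIdealOn k Γ U = Ideal.span (Set.range fun e => monomial (g e) (1 : k)) := by
    rw [edgeIdealOn]
    congr 1
    ext f
    simp only [Set.mem_setOf_eq, Set.mem_range]
    constructor
    · rintro ⟨i, j, hij, rfl⟩
      exact ⟨⟨(i, j), hij⟩, by simp [g, X, monomial_mul]⟩
    · rintro ⟨⟨⟨i, j⟩, hij⟩, rfl⟩
      exact ⟨i, j, hij, by simp [g, X, monomial_mul]⟩
  have hL := Gal.ass_iff _ t _ (idealV_eq k n Γ v ι (fun _ => rfl))
  have hR := Gal.ass_iff g t _ hJ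
  refine hL.trans (Iff.trans ?_ hR.symm)
  refine Gal.comb_main _ _ φ ?_ ?_ ?_ ?_ ?_ t y0
  · rintro ⟨⟨i, j⟩, hij⟩ z hz
    have hz' : z = i ∨ z = j := by
      by_contra hc
      push Not at hc
      simp [g, Finsupp.single_apply, hc.1.symm, hc.2.symm] at hz
    rcases hz' with rfl | rfl
    · exact ⟨j, fun x => by simp [g, Finsupp.single_apply, Gal.ind, eq_comm]⟩
    · exact ⟨i, fun x => by simp [g, Finsupp.single_apply, Gal.ind, eq_comm, add_comm]⟩
  · rintro ⟨⟨i, j⟩, hij⟩ x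
    simp [hφ1, g, Finsupp.single_apply, hιinj.eq_iff]
  · rintro ⟨⟨i, j⟩, hij⟩ y
    simp [hφ2, Finsupp.single_apply, hdis]
  · intro y x
    simp [hφ1, Finsupp.single_apply, (hdis x y).symm]
  · intro y y'
    by_cases h : y = y'
    · subst h
      simp [hφ2]
    · have h' : y.1 ≠ y'.1 := fun hc => h (Subtype.ext hc)
      simp [hφ2, Finsupp.single_apply, h, h']

end
end

section
/- Let t ≥ 1 and a ∈ ℕ^n. If F ⊆ V is a facet of the degree complex Δ_a(I^t), then the prime ideal P_F = (x_i : i ∉ F) is an associated prime of R/I^t. -/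
open MvPolynomial

noncomputable section

theorem PF_mem_iff (k : Type) [Field k] {n : ℕ} (F : Finset (Fin n))
    (f : MvPolynomial (Fin n) k) :
    f ∈ PF k F ↔ ∀ m ∈ f.support, ∃ i ∉ F, (m : Fin n →₀ ℕ) i ≠ 0 := by
  have : PF k F = Ideal.span (MvPolynomial.X '' {i | i ∉ F}) := by
    unfold PF
    congr 1
    ext m
    simp [eq_comm]
  rw [this, mem_ideal_span_X_image]
  rfl

theorem X_mem_PF (k : Type) [Field k] {n : ℕ} (F : Finset (Fin n)) (j : Fin n)
    (h : (X j : MvPolynomial (Fin n) k) ∈ PF k F) : j ∉ F := by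
  rw [PF_mem_iff] at h
  obtain ⟨i, hi, h2⟩ := h (Finsupp.single j 1) (by simp [X, mem_support_iff])
  rw [Finsupp.single_apply] at h2
  split_ifs at h2 with h3
  · exact h3 ▸ hi
  · simp at h2

theorem PF_prime (k : Type) [Field k] {n : ℕ} (F : Finset (Fin n)) : (PF k F).IsPrime := by
  let φ : MvPolynomial (Fin n) k →ₐ[k] MvPolynomial (Fin n) k :=
    aeval (fun i => if i ∈ F then X i else 0)
  have key : PF k F = RingHom.ker φ := by
    apply le_antisymm
    · refine Ideal.span_le.2 ?_
      rintro _ ⟨i, hi, rfl⟩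
      simp [RingHom.mem_ker, φ, hi]
    · intro p hp
      have : ∀ p, p - φ p ∈ PF k F := by
        intro p
        induction p using MvPolynomial.induction_on with
        | C c => simp [φ]
        | add p q hp hq =>
          rw [map_add, add_sub_add_comm]
          exact add_mem hp hq
        | mul_X p i hp =>
          have h1 : X i - φ (X i) ∈ PF k F := by
            by_cases hi : i ∈ F
            · simp [φ, hi]
            · have h3 : (X i : MvPolynomial (Fin n) k) ∈ PF k F :=
                Ideal.subset_span ⟨i, hi, rfl⟩
              simpa [φ, hi] using h3
          have h2 : p * X i - φ (p * X i) = (p - φ p) * X i + φ p * (X i - φ (X i)) := by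
            rw [map_mul]; ring
          rw [h2]
          exact add_mem (Ideal.mul_mem_right _ _ hp) (Ideal.mul_mem_left _ _ h1)
      have h := this p
      rw [RingHom.mem_ker] at hp
      rwa [hp, sub_zero] at h
  rw [key]
  exact RingHom.ker_isPrime _

theorem edgeIdeal_pow_span (k : Type) [Field k] {n : ℕ} (Γ : SimpleGraph (Fin n)) (t : ℕ) :
    ∃ S : Set (Fin n →₀ ℕ),
      (edgeIdeal k Γ) ^ t = Ideal.span ((fun s => monomial s (1 : k)) '' S) := by
  induction t with
  | zero =>
    refine ⟨{0}, ?_⟩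
    simp
  | succ t ih =>
    obtain ⟨S, hS⟩ := ih
    refine ⟨{d | ∃ s ∈ S, ∃ i j, Γ.Adj i j ∧
      d = s + (Finsupp.single i 1 + Finsupp.single j 1)}, ?_⟩
    rw [pow_succ, hS, edgeIdeal, Ideal.span_mul_span']
    congr 1
    ext m
    simp only [Set.mem_mul, Set.mem_image, Set.mem_ofPred_eq]
    constructor
    · rintro ⟨_, ⟨s, hs, rfl⟩, _, ⟨i, j, hij, rfl⟩, rfl⟩
      exact ⟨_, ⟨s, hs, i, j, hij, rfl⟩, by simp [X, monomial_mul]⟩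
    · rintro ⟨_, ⟨s, hs, i, j, hij, rfl⟩, rfl⟩
      exact ⟨_, ⟨s, hs, rfl⟩, _, ⟨i, j, hij, rfl⟩, by simp [X, monomial_mul]⟩

theorem xPow_eq (k : Type) [Field k] {n : ℕ} (a : Fin n → ℕ) :
    xPow k a = monomial (Finsupp.equivFunOnFinite.symm a) (1 : k) := by
  rw [monomial_eq, Finsupp.prod_fintype _ _ (by simp)]
  simp [xPow]

theorem monomial_mem_closure (k : Type) [Field k] {n : ℕ} (F : Finset (Fin n))
    (m : Fin n →₀ ℕ) (h : ∀ i ∉ F, m i = 0) :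
    monomial m (1 : k) ∈
      Submonoid.closure ((fun i => (X i : MvPolynomial (Fin n) k)) '' (F : Set (Fin n))) := by
  rw [monomial_eq, Finsupp.prod_fintype _ _ (by simp), C_1, one_mul]
  refine Submonoid.prod_mem _ fun i _ => ?_
  by_cases hi : i ∈ F
  · exact pow_mem (Submonoid.subset_closure (Set.mem_image_of_mem _ hi)) _
  · rw [h i hi, pow_zero]
    exact one_mem _

/-- If `F` is a facet of the degree complex `Δ_a(I^t)`, then
`P_F = (x_i : i ∉ F)` is an associated prime of `R/I^t`. -/
theorem stmt2 (k : Type) [Field k] (n : ℕ) (Γ : SimpleGraph (Fin n))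
    (hiso : NoIsolated Γ) (t : ℕ) (ht : 1 ≤ t) (a : Fin n → ℕ) (F : Finset (Fin n))
    (hF : IsFacet (degComplex k ((edgeIdeal k Γ) ^ t) a) F) :
    PF k F ∈ associatedPrimes (MvPolynomial (Fin n) k)
      (MvPolynomial (Fin n) k ⧸ (edgeIdeal k Γ) ^ t) := by
  set J := (edgeIdeal k Γ) ^ t with hJ
  have hmem : ∀ G : Finset (Fin n), G ∈ degComplex k J a ↔
      ¬ ∃ m ∈ Submonoid.closure
        ((fun i => (X i : MvPolynomial (Fin n) k)) '' (G : Set (Fin n))), m * xPow k a ∈ J := by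
    intro G
    rw [← IsLocalization.algebraMap_mem_map_algebraMap_iff _ (locAt k G)]
    rfl
  obtain ⟨hF1, hF2⟩ := hF
  rw [hmem] at hF1
  have hp := PF_prime k F
  rw [AssociatedPrimes.mem_iff, isAssociatedPrime_iff]
  refine ⟨hp, Submodule.exists_eq_colon_of_mem_minimalPrimes
    (x := Ideal.Quotient.mk J (xPow k a)) ?_⟩
  have hcol : ∀ r : MvPolynomial (Fin n) k,
      r ∈ (⊥ : Submodule (MvPolynomial (Fin n) k) (MvPolynomial (Fin n) k ⧸ J)).colon
        {Ideal.Quotient.mk J (xPow k a)} ↔ r * xPow k a ∈ J := by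
    intro r
    rw [Submodule.mem_colon_singleton, Submodule.mem_bot, ← Ideal.Quotient.eq_zero_iff_mem,
      map_mul]
    rfl
  refine ⟨⟨hp, ?_⟩, ?_⟩
  · intro r hr
    rw [hcol] at hr
    rw [PF_mem_iff]
    intro m hm
    by_contra! hcon
    obtain ⟨S, hS⟩ := edgeIdeal_pow_span k Γ t
    refine hF1 ⟨monomial m 1, monomial_mem_closure k F m hcon, ?_⟩
    rw [hJ, hS, mem_ideal_span_monomial_image] at hr ⊢
    rw [xPow_eq] at hr ⊢
    intro d hd
    rw [monomial_mul, mul_one] at hd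
    replace hd := Finset.mem_singleton.1 (support_monomial_subset hd)
    subst hd
    apply hr
    rw [mem_support_iff, coeff_mul_monomial, mul_one]
    exact mem_support_iff.1 hm
  · rintro q ⟨hq, hq2⟩ hq3
    refine Ideal.span_le.2 ?_
    rintro _ ⟨i, hi, rfl⟩
    have hG : insert i F ∉ degComplex k J a := fun h =>
      hi (hF2 _ h (Finset.subset_insert i F) ▸ Finset.mem_insert_self i F)
    rw [hmem, not_not] at hG
    obtain ⟨m, hm, hmJ⟩ := hG
    have hmq : m ∈ q := hq2 ((hcol m).2 hmJ)
    by_contra hiq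
    have hle : Submonoid.closure ((fun i => (X i : MvPolynomial (Fin n) k)) ''
        ((insert i F : Finset (Fin n)) : Set (Fin n))) ≤ q.primeCompl := by
      rw [Submonoid.closure_le]
      rintro _ ⟨j, hj, rfl⟩ hjq
      rcases Finset.mem_insert.1 hj with rfl | hj
      · exact hiq hjq
      · exact X_mem_PF k F j (hq3 hjq) hj
    exact hle hm hmq

end
end

section
/- Let t ≥ 1 and a ∈ ℕ^n. A subset F ⊆ V is a facet of the degree complex Δ_a(I^{(t)}) of the t-th symbolic power if and only if F is a maximal independent set of Γ and Σ_{i ∉ F} a_i < t. -/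
open MvPolynomial

noncomputable section

theorem mem_degComplex_iff (k : Type) [Field k] (n : ℕ) (Γ : SimpleGraph (Fin n))
    (t : ℕ) (a : Fin n → ℕ) (G : Finset (Fin n)) :
    G ∈ degComplex k (symbPow k Γ t) a ↔
      ∃ H, IsMaxIndep Γ H ∧ G ⊆ H ∧ ∑ i ∈ Hᶜ, a i < t := by
  unfold degComplex
  rw [Set.mem_setOf_eq, IsLocalization.algebraMap_mem_map_algebraMap_iff
    (Submonoid.closure ((fun i => (X i : MvPolynomial (Fin n) k)) '' (G : Set (Fin n))))]
  constructor
  · intro h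
    by_contra! hc
    apply h
    refine ⟨(∏ i ∈ G, X i) ^ t, ?_, ?_⟩
    · exact Submonoid.pow_mem _ (Submonoid.prod_mem _ fun i hi =>
        Submonoid.subset_closure (Set.mem_image_of_mem _ hi)) t
    · unfold symbPow
      simp only [Ideal.mem_iInf, Set.mem_setOf_eq]
      intro H hH
      by_cases hGH : G ⊆ H
      · apply Ideal.mul_mem_left
        apply Ideal.pow_le_pow_right (hc H hH hGH)
        unfold xPow
        rw [← Finset.prod_mul_prod_compl H]
        apply Ideal.mul_mem_left
        rw [← Finset.prod_pow_eq_pow_sum]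
        apply Ideal.prod_mem_prod
        intro i hi
        have hi' : i ∉ H := by simpa using hi
        have hX : (X i : MvPolynomial (Fin n) k) ∈ PF k H := Ideal.subset_span ⟨i, hi', rfl⟩
        exact Ideal.pow_mem_pow hX _
      · obtain ⟨i, hi, hiH⟩ := Finset.not_subset.mp hGH
        apply Ideal.mul_mem_right
        apply Ideal.pow_mem_pow
        exact Ideal.mem_of_dvd _ (Finset.dvd_prod_of_mem _ hi)
          (Ideal.subset_span ⟨i, hiH, rfl⟩)
  · rintro ⟨H, hH, hGH, hlt⟩ ⟨m, hm, hmem⟩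
    unfold symbPow at hmem
    simp only [Ideal.mem_iInf, Set.mem_setOf_eq] at hmem
    have h1 := hmem H hH
    let φ : MvPolynomial (Fin n) k →ₐ[k] Polynomial k :=
      aeval (fun i => if i ∈ H then 1 else Polynomial.X)
    have hP : (PF k H).map φ ≤ Ideal.span {Polynomial.X} := by
      unfold PF
      rw [Ideal.map_span, Ideal.span_le]
      rintro _ ⟨_, ⟨i, hi, rfl⟩, rfl⟩
      apply Ideal.subset_span
      simp [φ, hi]
    have h2 : φ (m * xPow k a) ∈ Ideal.span {(Polynomial.X : Polynomial k)} ^ t := by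
      apply Ideal.pow_right_mono hP t
      rw [← Ideal.map_pow]
      exact Ideal.mem_map_of_mem φ h1
    have hm1 : φ m = 1 := by
      clear h2 h1 hmem
      induction hm using Submonoid.closure_induction with
      | mem x hx =>
        obtain ⟨i, hi, rfl⟩ := hx
        have : i ∈ H := hGH hi
        simp [φ, this]
      | one => simp
      | mul x y _ _ hx hy => rw [map_mul, hx, hy, one_mul]
    have hx : φ (xPow k a) = Polynomial.X ^ (∑ i ∈ Hᶜ, a i) := by
      unfold xPow
      rw [map_prod, ← Finset.prod_mul_prod_compl H, ← Finset.prod_pow_eq_pow_sum]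
      rw [Finset.prod_eq_one, one_mul]
      · refine Finset.prod_congr rfl fun i hi => ?_
        have : i ∉ H := by simpa using hi
        simp [φ, this]
      · intro i hi
        simp [φ, hi]
    rw [map_mul, hm1, one_mul, hx, Ideal.span_singleton_pow, Ideal.mem_span_singleton,
      Polynomial.X_pow_dvd_iff] at h2
    have := h2 _ hlt
    simp at this

/-- `F` is a facet of the degree complex `Δ_a(I^{(t)})` of the `t`-th
symbolic power if and only if `F` is a maximal independent set of `Γ` and
`Σ_{i ∉ F} a_i < t`. -/
theorem stmt3 (k : Type) [Field k] (n : ℕ) (Γ : SimpleGraph (Fin n))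
    (hiso : NoIsolated Γ) (t : ℕ) (ht : 1 ≤ t) (a : Fin n → ℕ) (F : Finset (Fin n)) :
    IsFacet (degComplex k (symbPow k Γ t) a) F ↔
      (IsMaxIndep Γ F ∧ ∑ i ∈ Fᶜ, a i < t) := by
  simp only [IsFacet, mem_degComplex_iff]
  constructor
  · rintro ⟨⟨H, hH, hFH, hlt⟩, hmax⟩
    obtain rfl := hmax H ⟨H, hH, subset_rfl, hlt⟩ hFH
    exact ⟨hH, hlt⟩
  · rintro ⟨hF, hlt⟩
    refine ⟨⟨F, hF, subset_rfl, hlt⟩, ?_⟩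
    rintro G ⟨H, hH, hGH, -⟩ hFG
    obtain rfl := hF.2 H hH.1 (hFG.trans hGH)
    exact hGH.antisymm hFG

end
end

section
/- Let Γ be a connected bipartite graph with bipartition (F, G) of its vertex set V = {1,…,n}. For every integer t ≥ n there exists a ∈ ℕ^n with a_i > 0 for all i ∈ V such that F and G are the only facets of the degree complex Δ_a(I^t) and Σ_{i ∈ F} a_i = Σ_{i ∈ G} a_i = t − 1. -/
open MvPolynomial

noncomputable section

/-- The monomial of an edge. -/
def edgeMon (k : Type) [Field k] {n : ℕ} (e : Sym2 (Fin n)) : MvPolynomial (Fin n) k :=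
  ∏ i, if i ∈ e then X i else 1

lemma edgeMon_mk (k : Type) [Field k] {n : ℕ} {i j : Fin n} (h : i ≠ j) :
    edgeMon k s(i, j) = X i * X j := by
  unfold edgeMon
  rw [← Finset.prod_filter]
  have : Finset.univ.filter (fun x => x ∈ s(i, j)) = {i, j} := by
    ext x; simp
  rw [this, Finset.prod_pair h]

lemma XX_mem (k : Type) [Field k] {n : ℕ} {Γ : SimpleGraph (Fin n)} {i j : Fin n}
    (h : Γ.Adj i j) : (X i * X j : MvPolynomial (Fin n) k) ∈ edgeIdeal k Γ :=
  Ideal.subset_span ⟨i, j, h, rfl⟩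

lemma edgeMon_mem (k : Type) [Field k] {n : ℕ} {Γ : SimpleGraph (Fin n)} (e : Sym2 (Fin n))
    (h : e ∈ Γ.edgeSet) : edgeMon k e ∈ edgeIdeal k Γ := by
  induction e with
  | _ i j =>
    rw [SimpleGraph.mem_edgeSet] at h
    rw [edgeMon_mk k h.ne]
    exact XX_mem k h

lemma xPow_degree (k : Type) [Field k] {n : ℕ} (T : SimpleGraph (Fin n))
    [DecidableRel T.Adj] :
    xPow k (fun i => T.degree i) = ∏ e ∈ T.edgeFinset, edgeMon k e := by
  unfold xPow edgeMon
  rw [Finset.prod_comm]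
  refine Finset.prod_congr rfl fun i _ => ?_
  rw [← Finset.prod_filter, Finset.prod_const, ← SimpleGraph.incidenceFinset_eq_filter,
    SimpleGraph.card_incidenceFinset_eq_degree]

lemma walk_mem (k : Type) [Field k] {n : ℕ} {Γ T : SimpleGraph (Fin n)} (hT : T ≤ Γ)
    {F G : Finset (Fin n)} (hb : T.IsBipartiteWith (F : Set (Fin n)) G)
    {u v : Fin n} (p : T.Walk u v) (hv : v ∈ G) :
    (u ∈ G → ∃ Q ∈ edgeIdeal k Γ ^ p.length,
      (p.edges.map (edgeMon k)).prod * X v = Q * X u) ∧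
    (u ∈ F → (p.edges.map (edgeMon k)).prod * X u * X v ∈ edgeIdeal k Γ ^ (p.length + 1)) := by
  have hd := Finset.disjoint_left.1 (Finset.disjoint_coe.1 hb.disjoint)
  induction p with
  | nil => exact ⟨fun _ => ⟨1, by simp, by simp⟩, fun h => (hd h hv).elim⟩
  | @cons u w v h p ih =>
    obtain ⟨ih1, ih2⟩ := ih hv
    have hm := hb.mem_of_adj h
    simp only [Finset.mem_coe] at hm
    have hXX := XX_mem k (hT h)
    simp only [SimpleGraph.Walk.edges_cons, List.map_cons, List.prod_cons, edgeMon_mk k h.ne,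
      SimpleGraph.Walk.length_cons]
    constructor
    · intro hu
      have hw : w ∈ F := by
        rcases hm with hm | hm
        · exact (hd hm.1 hu).elim
        · exact hm.2
      exact ⟨_, ih2 hw, by ring⟩
    · intro hu
      have hw : w ∈ G := by
        rcases hm with hm | hm
        · exact hm.2
        · exact (hd hu hm.1).elim
      obtain ⟨Q, hQ, e⟩ := ih1 hw
      have : (X u * X w * (p.edges.map (edgeMon k)).prod * X u * X v : MvPolynomial (Fin n) k)
          = Q * (X u * X w) * (X u * X w) := by
        linear_combination (X u * X w * X u) * e
      rw [this, pow_succ, pow_succ]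
      exact Ideal.mul_mem_mul (Ideal.mul_mem_mul hQ hXX) hXX

lemma prod_mem_pow {R ι : Type} [CommRing R] (I : Ideal R) (s : Finset ι) (f : ι → R)
    (h : ∀ i ∈ s, f i ∈ I) : ∏ i ∈ s, f i ∈ I ^ s.card := by
  have := Ideal.prod_mem_prod (s := s) (I := fun _ => I) (x := f) h
  simpa using this

/-- multiplying the tree monomial by two vertices on opposite sides -/
lemma tree_mem (k : Type) [Field k] {n : ℕ} {Γ T : SimpleGraph (Fin n)} [DecidableRel T.Adj]
    (hT : T ≤ Γ) (hc : T.Connected)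
    {F G : Finset (Fin n)} (hb : T.IsBipartiteWith (F : Set (Fin n)) G)
    {u v : Fin n} (hu : u ∈ F) (hv : v ∈ G) :
    xPow k (fun i => T.degree i) * X u * X v ∈ edgeIdeal k Γ ^ (T.edgeFinset.card + 1) := by
  obtain ⟨p, hp⟩ := (hc.preconnected u v).exists_isPath
  have h1 := (walk_mem k hT hb p hv).2 hu
  have hnd : p.edges.Nodup := hp.isTrail.edges_nodup
  have hsub : p.edges.toFinset ⊆ T.edgeFinset := by
    intro e he
    simpa using p.edges_subset_edgeSet (List.mem_toFinset.1 he)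
  rw [← List.prod_toFinset _ hnd] at h1
  have hcard : p.edges.toFinset.card = p.length := by
    rw [List.toFinset_card_of_nodup hnd, SimpleGraph.Walk.length_edges]
  have h2 := prod_mem_pow (edgeIdeal k Γ) (T.edgeFinset \ p.edges.toFinset) (edgeMon k)
    (fun e he => edgeMon_mem k e (by
      have := (Finset.mem_sdiff.1 he).1
      exact SimpleGraph.edgeSet_mono hT (by simpa using this)))
  have h3 := Ideal.mul_mem_mul h2 h1
  rw [← pow_add, Finset.card_sdiff_of_subset hsub, hcard] at h3
  have hle := Finset.card_le_card hsub
  rw [hcard] at hle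
  rw [xPow_degree, ← Finset.prod_sdiff hsub]
  have he : T.edgeFinset.card - p.length + (p.length + 1) = T.edgeFinset.card + 1 := by omega
  rw [he] at h3
  convert h3 using 1
  ring

lemma not_face (k : Type) [Field k] {n : ℕ} (J : Ideal (MvPolynomial (Fin n) k))
    (a : Fin n → ℕ) (H : Finset (Fin n)) {u v : Fin n} (hu : u ∈ H) (hv : v ∈ H)
    (h : xPow k a * X u * X v ∈ J) : H ∉ degComplex k J a := by
  intro hH
  apply hH
  rw [IsLocalization.algebraMap_mem_map_algebraMap_iff
    (Submonoid.closure ((fun i => (X i : MvPolynomial (Fin n) k)) '' (H : Set (Fin n))))]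
  refine ⟨X u * X v, mul_mem (Submonoid.subset_closure ⟨u, hu, rfl⟩)
    (Submonoid.subset_closure ⟨v, hv, rfl⟩), ?_⟩
  convert h using 1
  ring

lemma face (k : Type) [Field k] {n : ℕ} (Γ : SimpleGraph (Fin n))
    (F : Finset (Fin n)) (hF : IsIndep Γ F) (t : ℕ) (a : Fin n → ℕ)
    (ha : ∑ i ∈ Fᶜ, a i < t) : F ∈ degComplex k (edgeIdeal k Γ ^ t) a := by
  intro h
  rw [IsLocalization.algebraMap_mem_map_algebraMap_iff
    (Submonoid.closure ((fun i => (X i : MvPolynomial (Fin n) k)) '' (F : Set (Fin n))))] at h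
  obtain ⟨m, hm, h⟩ := h
  let φ : MvPolynomial (Fin n) k →ₐ[k] Polynomial k :=
    aeval (fun i => if i ∈ F then 1 else Polynomial.X)
  have hφ : ∀ i, φ (X i) = if i ∈ F then 1 else Polynomial.X := fun i => by simp [φ]
  have h1 : φ m = 1 := by
    clear h
    induction hm using Submonoid.closure_induction with
    | mem x hx =>
      obtain ⟨i, hi, rfl⟩ := hx
      simp only [hφ]
      exact if_pos hi
    | one => simp
    | mul x y _ _ hx hy => rw [map_mul, hx, hy, one_mul]
  have h2 : φ (xPow k a) = Polynomial.X ^ (∑ i ∈ Fᶜ, a i) := by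
    unfold xPow
    rw [map_prod, ← Finset.prod_pow_eq_pow_sum, ← Finset.prod_mul_prod_compl F]
    rw [Finset.prod_eq_one, one_mul]
    · refine Finset.prod_congr rfl fun i hi => ?_
      rw [map_pow, hφ, if_neg (Finset.mem_compl.1 hi)]
    · intro i hi
      rw [map_pow, hφ, if_pos hi, one_pow]
  have h3 : (edgeIdeal k Γ).map φ ≤ Ideal.span {Polynomial.X} := by
    rw [edgeIdeal, Ideal.map_span, Ideal.span_le]
    rintro _ ⟨_, ⟨i, j, hij, rfl⟩, rfl⟩
    simp only [SetLike.mem_coe, Ideal.mem_span_singleton, map_mul, hφ]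
    by_cases hi : i ∈ F
    · have hj : j ∉ F := fun hj => hF i hi j hj hij
      simp [hi, hj]
    · rw [if_neg hi]
      exact dvd_mul_right _ _
  have h4 := Ideal.mem_map_of_mem φ h
  rw [map_mul, h1, one_mul, h2, Ideal.map_pow] at h4
  have h5 := Ideal.pow_right_mono h3 t h4
  rw [Ideal.span_singleton_pow, Ideal.mem_span_singleton] at h5
  have := (pow_dvd_pow_iff Polynomial.X_ne_zero Polynomial.not_isUnit_X).1 h5
  omega

/-- Let `Γ` be a connected bipartite graph with bipartition `(F, G)`.
For every `t ≥ n` there exists `a ∈ ℕ^n` with all entries positive such that `F` and `G`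
are the only facets of the degree complex `Δ_a(I^t)` and
`Σ_{i ∈ F} a_i = Σ_{i ∈ G} a_i = t - 1`. -/
theorem stmt4 (k : Type) [Field k] (n : ℕ) (Γ : SimpleGraph (Fin n))
    (hiso : NoIsolated Γ) (hconn : Γ.Connected)
    (F G : Finset (Fin n)) (hdisj : Disjoint F G) (hunion : F ∪ G = Finset.univ)
    (hF : IsIndep Γ F) (hG : IsIndep Γ G)
    (t : ℕ) (ht : n ≤ t) :
    ∃ a : Fin n → ℕ, (∀ i, 0 < a i) ∧
      IsFacet (degComplex k ((edgeIdeal k Γ) ^ t) a) F ∧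
      IsFacet (degComplex k ((edgeIdeal k Γ) ^ t) a) G ∧
      (∀ H : Finset (Fin n),
        IsFacet (degComplex k ((edgeIdeal k Γ) ^ t) a) H → H = F ∨ H = G) ∧
      ∑ i ∈ F, a i = t - 1 ∧ ∑ i ∈ G, a i = t - 1 := by
  classical
  obtain ⟨T, hTΓ, hT⟩ := hconn.exists_isTree_le
  have hmem : ∀ i, i ∈ F ∨ i ∈ G := fun i => by
    have : i ∈ F ∪ G := hunion ▸ Finset.mem_univ i
    exact Finset.mem_union.1 this
  have hd := Finset.disjoint_left.1 hdisj
  have hb : T.IsBipartiteWith (F : Set (Fin n)) G := by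
    refine ⟨Finset.disjoint_coe.2 hdisj, fun v w h => ?_⟩
    simp only [Finset.mem_coe]
    have h' := hTΓ h
    rcases hmem v with hv | hv <;> rcases hmem w with hw | hw
    · exact (hF v hv w hw h').elim
    · exact Or.inl ⟨hv, hw⟩
    · exact Or.inr ⟨hv, hw⟩
    · exact (hG v hv w hw h').elim
  have hFc : Fᶜ = G := by
    ext i; rw [Finset.mem_compl]
    exact ⟨fun h => (hmem i).resolve_left h, fun h h' => hd h' h⟩
  have hGc : Gᶜ = F := by rw [← hFc, compl_compl]
  have hcard := hT.card_edgeFinset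
  rw [Fintype.card_fin] at hcard
  obtain ⟨f0, g0, hf0, hg0, h0⟩ : ∃ f g, f ∈ F ∧ g ∈ G ∧ Γ.Adj f g := by
    obtain ⟨v⟩ := hconn.nonempty
    obtain ⟨w, hw⟩ := hiso v
    rcases hmem v with hv | hv
    · exact ⟨v, w, hv, (hmem w).resolve_left fun h => hF v hv w h hw, hw⟩
    · exact ⟨w, v, (hmem w).resolve_right fun h => hG v hv w h hw, hv, hw.symm⟩
  have hfg : f0 ≠ g0 := h0.ne
  let b : Fin n → ℕ := fun i => if i ∈ s(f0, g0) then t - n else 0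
  let a : Fin n → ℕ := fun i => T.degree i + b i
  have hxa : xPow k a = xPow k (fun i => T.degree i) * (X f0 * X g0) ^ (t - n) := by
    simp only [xPow, a, b, pow_add, Finset.prod_mul_distrib]
    congr 1
    rw [← edgeMon_mk k hfg, edgeMon, ← Finset.prod_pow]
    refine Finset.prod_congr rfl fun i _ => ?_
    split_ifs <;> simp
  have hbF : ∑ i ∈ F, b i = t - n := by
    rw [Finset.sum_eq_single_of_mem f0 hf0]
    · simp [b]
    · intro i hi hne
      have : i ≠ g0 := fun h => hd hi (h ▸ hg0)
      simp [b, hne, this]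
  have hbG : ∑ i ∈ G, b i = t - n := by
    rw [Finset.sum_eq_single_of_mem g0 hg0]
    · simp [b]
    · intro i hi hne
      have : i ≠ f0 := fun h => hd hf0 (h ▸ hi)
      simp [b, hne, this]
  have hsF : ∑ i ∈ F, a i = t - 1 := by
    simp only [a]
    rw [Finset.sum_add_distrib, hbF, SimpleGraph.isBipartiteWith_sum_degrees_eq_card_edges hb]
    omega
  have hsG : ∑ i ∈ G, a i = t - 1 := by
    simp only [a]
    rw [Finset.sum_add_distrib, hbG, SimpleGraph.isBipartiteWith_sum_degrees_eq_card_edges' hb]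
    omega
  have hfF : F ∈ degComplex k (edgeIdeal k Γ ^ t) a :=
    face k Γ F hF t a (by rw [hFc, hsG]; omega)
  have hfG : G ∈ degComplex k (edgeIdeal k Γ ^ t) a :=
    face k Γ G hG t a (by rw [hGc, hsF]; omega)
  have key : ∀ H ∈ degComplex k (edgeIdeal k Γ ^ t) a, H ⊆ F ∨ H ⊆ G := by
    intro H hH
    by_contra hcon
    rw [not_or, Finset.not_subset, Finset.not_subset] at hcon
    obtain ⟨⟨v, hv, hvF⟩, ⟨u, hu, huG⟩⟩ := hcon
    have huF := (hmem u).resolve_right huG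
    have hvG := (hmem v).resolve_left hvF
    refine not_face k _ a H hu hv ?_ hH
    have h1 := Ideal.mul_mem_mul (tree_mem k hTΓ hT.connected hb huF hvG)
      (Ideal.pow_mem_pow (XX_mem k h0) (t - n))
    rw [← pow_add, hcard, Nat.add_sub_cancel' ht] at h1
    rw [hxa]
    convert h1 using 1
    ring
  have hpos : ∀ i, 0 < a i := by
    intro i
    have : Nontrivial (Fin n) := ⟨f0, g0, hfg⟩
    have := hT.connected.preconnected.degree_pos_of_nontrivial i
    exact Nat.add_pos_left this _
  refine ⟨a, hpos, ⟨hfF, ?_⟩, ⟨hfG, ?_⟩, ?_, hsF, hsG⟩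
  · intro H hH hFH
    rcases key H hH with h | h
    · exact h.antisymm hFH
    · exact (hd hf0 (h (hFH hf0))).elim
  · intro H hH hGH
    rcases key H hH with h | h
    · exact (hd (h (hGH hg0)) hg0).elim
    · exact h.antisymm hGH
  · rintro H ⟨hH, hmax⟩
    rcases key H hH with h | h
    · exact Or.inl (hmax F hfF h).symm
    · exact Or.inr (hmax G hfG h).symm

end
end

section
/- Let Γ be a connected non-bipartite graph having at least one odd cycle whose vertex set is not dominating. Assume there exist an odd cycle C of length 2r+1 and a vertex v with v ∉ C and v not adjacent to any vertex of C, such that the induced subgraph Γ_{V∖N[v]} is connected. Then: (1) if the vertex set of C equals V∖N[v], then H^1_m(R/I^t) ≠ 0 for all t ≥ r+1; (2) if the vertex set of C is a proper subset of V∖N[v], then H^1_m(R/I^t) ≠ 0 for all t ≥ n − |N[v]| − r − 1. -/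
open MvPolynomial

noncomputable section

section
open CategoryTheory Limits Opposite

theorem aux_complex {D : Type*} [Category* D] [Abelian D] {K L : ChainComplex D ℕ} (γ : K ⟶ L)
    (T : D) [Injective T] (z : L.X 1 ⟶ T) (hz : L.d 2 1 ≫ z = 0)
    (h : HomologicalComplex.homologyMap γ 1 ≫ L.homologyι 1 ≫
      L.descOpcycles z 2 (by simp) hz = 0) :
    ∃ y : K.X 0 ⟶ T, K.d 1 0 ≫ y = γ.f 1 ≫ z := by
  have h2 : K.iCycles 1 ≫ γ.f 1 ≫ z = 0 := by
    have : K.homologyπ 1 ≫ HomologicalComplex.homologyMap γ 1 ≫ L.homologyι 1 ≫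
      L.descOpcycles z 2 (by simp) hz = 0 := by rw [h, comp_zero]
    simpa using this
  have hS : (ShortComplex.mk (K.iCycles 1) (K.d 1 0) (by simp)).Exact :=
    ShortComplex.exact_of_f_is_kernel _ (K.cyclesIsKernel 1 0 (by simp))
  exact ⟨hS.descToInjective _ h2, hS.comp_descToInjective _ h2⟩

theorem aux_ext {R : Type} [CommRing R] {A : ModuleCat.{0} R}
    (P : ProjectiveResolution A) (M : ModuleCat.{0} R) (z : P.complex.X 1 ⟶ M)
    (hz : P.complex.d 2 1 ≫ z = 0) :
    ∃ e : ((Ext R (ModuleCat.{0} R) 1).obj (op A)).obj M,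
      ∀ (B : ModuleCat.{0} R) (f : B ⟶ A) (Q : ProjectiveResolution B),
      (((Ext R (ModuleCat.{0} R) 1).map f.op).app M) e = 0 →
      ∃ y : Q.complex.X 0 ⟶ M, Q.complex.d 1 0 ≫ y = (ProjectiveResolution.lift f Q P).f 1 ≫ z := by
  let F : ModuleCat.{0} R ⥤ (ModuleCat.{0} R)ᵒᵖ := ((linearYoneda R (ModuleCat.{0} R)).obj M).rightOp
  let T : (ModuleCat.{0} R)ᵒᵖ := op (ModuleCat.of R R)
  have : Projective (ModuleCat.of R R) := inferInstance
  have : Injective T := inferInstance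
  let L := (F.mapHomologicalComplex (ComplexShape.down ℕ)).obj P.complex
  let z' : L.X 1 ⟶ T := Quiver.Hom.op
    (ModuleCat.ofHom (LinearMap.toSpanSingleton R (P.complex.X 1 ⟶ M) z))
  have hz' : L.d 2 1 ≫ z' = 0 := by
    apply Quiver.Hom.unop_inj
    apply ModuleCat.hom_ext
    apply LinearMap.ext_ring
    change P.complex.d 2 1 ≫ ((1:R) • z) = 0
    rw [one_smul, hz]
  let e' : (F.leftDerived 1).obj A ⟶ T := (P.isoLeftDerivedObj F 1).hom ≫ L.homologyι 1 ≫
      L.descOpcycles z' 2 (by simp) hz'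
  refine ⟨e'.unop.hom (1 : R), fun B f Q he => ?_⟩
  have h1 : (F.leftDerived 1).map f ≫ e' = 0 := by
    apply Quiver.Hom.unop_inj
    apply ModuleCat.hom_ext
    apply LinearMap.ext_ring
    exact he
  have h2 := ProjectiveResolution.isoLeftDerivedObj_hom_naturality f Q P
    (ProjectiveResolution.lift f Q P) (ProjectiveResolution.lift_commutes_zero f Q P) F 1
  have h3 : (Q.isoLeftDerivedObj F 1).hom ≫ HomologicalComplex.homologyMap
      ((F.mapHomologicalComplex (ComplexShape.down ℕ)).map (ProjectiveResolution.lift f Q P)) 1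
       ≫ L.homologyι 1 ≫ L.descOpcycles z' 2 (by simp) hz' = 0 := by
    rw [← h1]
    simp only [e']
    rw [reassoc_of% h2]
    rfl
  have h4 := (cancel_epi (Q.isoLeftDerivedObj F 1).hom).1 (h3.trans comp_zero.symm)
  obtain ⟨y, hy⟩ := aux_complex _ T z' hz' h4
  refine ⟨y.unop.hom (1:R), ?_⟩
  have := congrArg (fun q => q.unop.hom (1:R)) hy
  refine Eq.trans this ?_
  change (ProjectiveResolution.lift f Q P).f 1 ≫ ((1:R) • z) = _
  rw [one_smul]

theorem aux_lc {R : Type} [CommRing R] (m : Ideal R) (M : ModuleCat.{0} R) (j : ℕ)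
    (φ : ↥(m ^ j) →ₗ[R] M)
    (h : ∀ s, j ≤ s → ∀ g : M, ∀ a : R, a - 1 ∈ m ^ j →
      ∃ (b : R) (_ : b ∈ m ^ s) (hj : b ∈ m ^ j), b • g ≠ a • φ ⟨b, hj⟩) :
    Nontrivial ((localCohomology m 1).obj M) := by
  let A : ModuleCat.{0} R := ModuleCat.of R (R ⧸ m ^ j)
  let P : ProjectiveResolution A := projectiveResolution A
  let pR : ModuleCat.of R R ⟶ A := ModuleCat.ofHom (Submodule.mkQ (m ^ j))
  have : Epi pR := (ModuleCat.epi_iff_surjective _).2 (Submodule.mkQ_surjective _)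
  let ρ : P.complex.X 0 ⟶ ModuleCat.of R R := Projective.factorThru (X := A) (P.π.f 0) pR
  have hρ : ρ ≫ pR = P.π.f 0 := Projective.factorThru_comp (X := A) (P.π.f 0) pR
  have hmem : ∀ x, ρ.hom (P.complex.d 1 0 x) ∈ m ^ j := by
    intro x
    rw [← Submodule.Quotient.mk_eq_zero (m^j)]
    have : (P.complex.d 1 0 ≫ ρ ≫ pR) x = 0 := by
      rw [hρ]; exact congrArg (fun w => w.hom x) P.complex_d_comp_π_f_zero
    exact this
  let z : P.complex.X 1 ⟶ M := ModuleCat.ofHom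
    (φ.comp ((ρ.hom.comp (P.complex.d 1 0).hom).codRestrict (m ^ j) hmem))
  have hz : P.complex.d 2 1 ≫ z = 0 := by
    ext x
    change φ ⟨ρ.hom ((P.complex.d 2 1 ≫ P.complex.d 1 0) x), _⟩ = 0
    have : ρ.hom ((P.complex.d 2 1 ≫ P.complex.d 1 0) x) = 0 := by
      rw [HomologicalComplex.d_comp_d]; exact map_zero _
    rw [← map_zero φ]; congr 1; exact Subtype.ext this
  obtain ⟨e, he⟩ := aux_ext P M z hz
  by_contra hnt
  rw [not_nontrivial_iff_subsingleton] at hnt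
  let Dg := localCohomology.diagram (localCohomology.idealPowersDiagram m) 1
  have hD : IsColimit _ := isColimitOfPreserves ((evaluation (ModuleCat.{0} R) (ModuleCat.{0} R)).obj M)
    (colimit.isColimit Dg)
  let c := (((evaluation (ModuleCat.{0} R) (ModuleCat.{0} R)).obj M).mapCocone (colimit.cocone Dg))
  have hc : Subsingleton c.pt := hnt
  obtain ⟨k, f, g, hfg⟩ := Concrete.isColimit_exists_of_rep_eq _ hD (i := op (op j)) (j := op (op j))
     (e : _) 0 (Subsingleton.elim (α := c.pt) _ _)
  rw [map_zero] at hfg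
  let s : ℕ := k.unop.unop
  have hjs : j ≤ s := leOfHom f.unop.unop
  let B : ModuleCat.{0} R := ModuleCat.of R (R ⧸ m ^ s)
  let fB : B ⟶ A := (localCohomology.ringModIdeals (localCohomology.idealPowersDiagram m)).map f.unop
  let Q : ProjectiveResolution B := projectiveResolution B
  obtain ⟨y, hy⟩ := he B fB Q hfg
  have hπ : Function.Surjective (Q.π.f 0) := (ModuleCat.epi_iff_surjective _).1 inferInstance
  obtain ⟨q, hq⟩ := hπ (Submodule.Quotient.mk (p := m ^ s) (1 : R) : R ⧸ m ^ s)
  have ha : ρ.hom ((ProjectiveResolution.lift fB Q P).f 0 q) - 1 ∈ m ^ j := by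
    rw [← Submodule.Quotient.eq (m ^ j)]
    have h1 : ((ProjectiveResolution.lift fB Q P).f 0 ≫ ρ ≫ pR) q = (Q.π.f 0 ≫ fB) q := by
      rw [hρ]; exact congrArg (fun w => w.hom q) (ProjectiveResolution.lift_commutes_zero fB Q P)
    refine Eq.trans h1 ?_
    change fB (Q.π.f 0 q) = _
    rw [hq]
    rfl
  obtain ⟨b, hs, hj, hne⟩ := h s hjs (y q) _ ha
  apply hne
  have hex := Q.exact₀
  rw [ShortComplex.moduleCat_exact_iff] at hex
  obtain ⟨x, hx⟩ := hex (b • q) (by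
    change Q.π.f 0 (b • q) = 0
    rw [map_smul, hq]
    refine ((Submodule.Quotient.mk_smul (m^s) b (1:R)).symm).trans ?_
    exact (Submodule.Quotient.mk_eq_zero (m^s)).2 (by simpa using hs))
  change Q.complex.d 1 0 x = b • q at hx
  have h5 : y (Q.complex.d 1 0 x) = z ((ProjectiveResolution.lift fB Q P).f 1 x) :=
    congrArg (fun w => w x) hy
  rw [hx, map_smul] at h5
  rw [h5, ← map_smul]
  change φ ⟨ρ.hom (P.complex.d 1 0 ((ProjectiveResolution.lift fB Q P).f 1 x)), _⟩ = _
  congr 1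
  apply Subtype.ext
  change ρ.hom (P.complex.d 1 0 ((ProjectiveResolution.lift fB Q P).f 1 x)) = _ • b
  have h6 : P.complex.d 1 0 ((ProjectiveResolution.lift fB Q P).f 1 x) =
    (ProjectiveResolution.lift fB Q P).f 0 (Q.complex.d 1 0 x) :=
    congrArg (fun w => w x) ((ProjectiveResolution.lift fB Q P).comm 1 0)
  rw [h6, hx, map_smul, map_smul]
  exact mul_comm _ _

end

def wtIdeal (k : Type) [Field k] {n : ℕ} (w : Fin n → ℕ) (N : ℕ) :
    Ideal (MvPolynomial (Fin n) k) where
  carrier := {p | ∀ b ∈ p.support, N ≤ ∑ i, w i * b i}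
  zero_mem' := by intro b hb; simp at hb
  add_mem' := by
    intro p q hp hq b hb
    have := MvPolynomial.support_add hb
    rw [Finset.mem_union] at this
    rcases this with h | h
    · exact hp b h
    · exact hq b h
  smul_mem' := by
    classical
    intro c p hp b hb
    have := MvPolynomial.support_mul c p hb
    rw [Finset.mem_add] at this
    obtain ⟨x, hx, y, hy, rfl⟩ := this
    refine (hp y hy).trans ?_
    apply Finset.sum_le_sum
    intro i _
    apply Nat.mul_le_mul_left
    simp

theorem wtIdeal_mul (k : Type) [Field k] {n : ℕ} (w : Fin n → ℕ) (N M : ℕ) :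
    wtIdeal k w N * wtIdeal k w M ≤ wtIdeal k w (N + M) := by
  classical
  rw [Ideal.mul_le]
  intro p hp q hq b hb
  have := MvPolynomial.support_mul p q hb
  rw [Finset.mem_add] at this
  obtain ⟨x, hx, y, hy, rfl⟩ := this
  have h1 := hp x hx
  have h2 := hq y hy
  simp only [Finsupp.add_apply, mul_add, Finset.sum_add_distrib]
  omega

theorem edge_wt (k : Type) [Field k] {n : ℕ} (Γ : SimpleGraph (Fin n)) (w : Fin n → ℕ)
    (hw : ∀ i j, Γ.Adj i j → 2 ≤ w i + w j) (t : ℕ) :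
    edgeIdeal k Γ ^ t ≤ wtIdeal k w (2 * t) := by
  classical
  induction t with
  | zero => intro p _ b _; simp
  | succ t ih =>
    rw [pow_succ]
    refine (Ideal.mul_mono ih ?_).trans (wtIdeal_mul k w (2 * t) 2)
    rw [edgeIdeal, Ideal.span_le]
    rintro _ ⟨i, j, hij, rfl⟩ b hb
    have h1 : (X i * X j : MvPolynomial (Fin n) k) =
      monomial (Finsupp.single i 1 + Finsupp.single j 1) 1 := by
      simp [X, monomial_mul]
    rw [h1] at hb
    have := MvPolynomial.support_monomial_subset hb
    rw [Finset.mem_singleton] at this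
    subst this
    refine (hw i j hij).trans (le_of_eq ?_)
    simp [mul_add, Finset.sum_add_distrib, Finsupp.single_apply]

theorem alg_main (k : Type) [Field k] (n : ℕ) (Γ : SimpleGraph (Fin n)) (v : Fin n) (t : ℕ)
    (a : Fin n →₀ ℕ) (ha : ∀ i, a i ≠ 0 → i ∈ ((closedNbhd Γ v)ᶜ : Set (Fin n)))
    (hsum : ∑ i, a i = 2 * t + 1)
    (h1 : (monomial a 1 : MvPolynomial (Fin n) k) ∈ edgeIdeal k Γ ^ t)
    (h2 : ∀ j ∈ ((closedNbhd Γ v)ᶜ : Set (Fin n)),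
      X j * (monomial a 1 : MvPolynomial (Fin n) k) ∈ edgeIdeal k Γ ^ (t + 1)) :
    Nontrivial (locCoh k ((edgeIdeal k Γ) ^ (t + 1)) 1) := by
  classical
  set f : MvPolynomial (Fin n) k := monomial a 1 with hf
  set J := edgeIdeal k Γ ^ (t + 1) with hJ
  let ev : MvPolynomial (Fin n) k →ₐ[k] MvPolynomial (Fin n) k :=
    aeval (fun i => if i = v then X v else 0)
  have hXv : (X v : MvPolynomial (Fin n) k) ≠ 0 := X_ne_zero v
  have hevm : (maxIdeal k (Fin n)).map ev.toRingHom ≤ Ideal.span {X v} := by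
    rw [maxIdeal, Ideal.map_span, Ideal.span_le]
    rintro _ ⟨_, ⟨i, rfl⟩, rfl⟩
    change ev (X i) ∈ Ideal.span {X v}
    simp only [ev, aeval_X]
    split_ifs
    · exact Ideal.mem_span_singleton_self _
    · exact Ideal.zero_mem _
  have hdvd : ∀ h ∈ maxIdeal k (Fin n) ^ 2, ∃ p, ev h = X v ^ 2 * p := by
    intro h hh
    have h3 : ev h ∈ (maxIdeal k (Fin n) ^ 2).map ev.toRingHom :=
      Ideal.mem_map_of_mem ev.toRingHom hh
    rw [Ideal.map_pow] at h3
    have := Ideal.pow_right_mono hevm 2 h3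
    rw [Ideal.span_singleton_pow, Ideal.mem_span_singleton] at this
    exact this
  have hkill : ∀ i, i ≠ v → X i * (X v * f) ∈ J := by
    intro i hi
    by_cases hi2 : i ∈ closedNbhd Γ v
    · have hadj : Γ.Adj v i := by
        rcases hi2 with h | h
        · exact absurd h hi
        · exact h
      have : (X i * (X v * f)) = f * (X v * X i) := by ring
      rw [this, hJ, pow_succ]
      exact Ideal.mul_mem_mul h1 (Ideal.subset_span ⟨v, i, hadj, rfl⟩)
    · have : (X i * (X v * f)) = X v * (X i * f) := by ring
      rw [this]
      exact Ideal.mul_mem_left _ _ (h2 i hi2)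
  have hev : ∀ g, (ev g - g) * (X v * f) ∈ J := by
    intro g
    let K : Ideal (MvPolynomial (Fin n) k) := Ideal.span {p | ∃ i, i ≠ v ∧ p = X i}
    have hK : ev g - g ∈ K := by
      rw [← Ideal.Quotient.mk_eq_mk_iff_sub_mem]
      have : (Ideal.Quotient.mkₐ k K).comp ev = Ideal.Quotient.mkₐ k K := by
        apply MvPolynomial.algHom_ext
        intro i
        simp only [AlgHom.comp_apply, ev, aeval_X]
        split_ifs with h
        · rw [h]
        · rw [map_zero]
          symm
          exact Ideal.Quotient.eq_zero_iff_mem.2 (Ideal.subset_span ⟨i, h, rfl⟩)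
      exact DFunLike.congr_fun this g
    generalize ev g - g = x at hK ⊢
    induction hK using Submodule.span_induction with
    | mem x hx => obtain ⟨i, hi, rfl⟩ := hx; exact hkill i hi
    | zero => simp
    | add x y _ _ hx hy => rw [add_mul]; exact J.add_mem hx hy
    | smul c x _ hx => rw [smul_eq_mul, mul_assoc]; exact J.mul_mem_left _ hx
  choose! p hp using hdvd
  have hX2 : (X v ^ 2 : MvPolynomial (Fin n) k) ≠ 0 := pow_ne_zero _ hXv
  let φ : ↥(maxIdeal k (Fin n) ^ 2) →ₗ[MvPolynomial (Fin n) k] (MvPolynomial (Fin n) k ⧸ J) :=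
    { toFun := fun h => Ideal.Quotient.mk J (f * X v * p h)
      map_add' := by
        intro x y
        rw [← map_add]
        congr 1
        have : p (x + y : MvPolynomial (Fin n) k) = p x + p y := by
          apply mul_left_cancel₀ hX2
          rw [← hp _ (Ideal.add_mem _ x.2 y.2), mul_add, ← hp _ x.2, ← hp _ y.2, map_add]
        rw [Submodule.coe_add, this, mul_add]
      map_smul' := by
        intro g x
        have : p (g * x : MvPolynomial (Fin n) k) = ev g * p x := by
          apply mul_left_cancel₀ hX2
          rw [← hp _ (Ideal.mul_mem_left _ _ x.2), map_mul, hp _ x.2]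
          ring
        change Ideal.Quotient.mk J (f * X v * p (g * x)) =
          Ideal.Quotient.mk J (g * (f * X v * p x))
        rw [this, Ideal.Quotient.mk_eq_mk_iff_sub_mem]
        have h4 := J.mul_mem_right (p x) (hev g)
        convert h4 using 1
        ring }
  refine aux_lc (maxIdeal k (Fin n)) _ 2 φ ?_
  intro s hs g b hb
  have hXm : (X v : MvPolynomial (Fin n) k) ∈ maxIdeal k (Fin n) := Ideal.subset_span ⟨v, rfl⟩
  have hb2 : (X v ^ s : MvPolynomial (Fin n) k) ∈ maxIdeal k (Fin n) ^ 2 :=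
    Ideal.pow_le_pow_right hs (Ideal.pow_mem_pow hXm s)
  refine ⟨X v ^ s, Ideal.pow_mem_pow hXm s, hb2, ?_⟩
  intro heq
  obtain ⟨s, rfl⟩ := Nat.exists_eq_add_of_le' hs
  have hpX : p (X v ^ (s + 2)) = X v ^ s := by
    apply mul_left_cancel₀ hX2
    rw [← hp _ hb2]
    simp only [ev, map_pow, aeval_X, if_true]
    ring
  obtain ⟨g, rfl⟩ := Ideal.Quotient.mk_surjective g
  have h5 : Ideal.Quotient.mk J (X v ^ (s + 2) * g) =
    Ideal.Quotient.mk J (b * (f * X v * X v ^ s)) := by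
    refine Eq.trans heq ?_
    change Ideal.Quotient.mk J (b * (f * X v * p (X v ^ (s + 2)))) = _
    rw [hpX]
  rw [Ideal.Quotient.mk_eq_mk_iff_sub_mem] at h5
  have hav : a v = 0 := by
    by_contra h
    exact ha v h (Or.inl rfl)
  -- constant coefficient
  have hb1 : coeff 0 b = 1 := by
    have h6 : maxIdeal k (Fin n) ^ 2 ≤ RingHom.ker (constantCoeff (R := k) (σ := Fin n)) := by
      refine (Ideal.pow_le_self two_ne_zero).trans ?_
      rw [maxIdeal, Ideal.span_le]
      rintro _ ⟨i, rfl⟩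
      simp [RingHom.mem_ker]
    have h7 := h6 hb
    rw [RingHom.mem_ker, map_sub, map_one, sub_eq_zero] at h7
    exact h7
  let w : Fin n → ℕ := fun i => if i = v then 0 else if Γ.Adj v i then 2 else 1
  have hw : ∀ i j, Γ.Adj i j → 2 ≤ w i + w j := by
    intro i j hij
    simp only [w]
    by_cases hi : i = v
    · subst hi; simp [hij, hij.ne']
    · by_cases hj : j = v
      · subst hj; simp [hij.symm, hij.ne]
      · simp only [hi, hj, if_false]
        split_ifs <;> omega
  have h8 := edge_wt k Γ w hw (t + 1) h5
  let e : Fin n →₀ ℕ := Finsupp.single v (s + 1) + a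
  have hmon : b * (f * X v * X v ^ s) = b * monomial e 1 := by
    congr 1
    have : (X v : MvPolynomial (Fin n) k) ^ (s + 1) = monomial (Finsupp.single v (s + 1)) 1 := by
      rw [X_pow_eq_monomial]
    rw [mul_assoc, ← pow_succ', this, hf, monomial_mul, mul_one, add_comm]
  have hc2 : coeff e (b * (f * X v * X v ^ s)) = 1 := by
    rw [hmon, coeff_mul_monomial']
    simp [hb1]
  have hc1 : coeff e (X v ^ (s + 2) * g) = 0 := by
    rw [X_pow_eq_monomial, coeff_monomial_mul', if_neg]
    intro hle
    have := hle v
    simp [e, hav] at this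
  have hc : e ∈ (X v ^ (s + 2) * g - b * (f * X v * X v ^ s)).support := by
    rw [mem_support_iff, coeff_sub, hc1, hc2]
    simp
  have h9 := h8 e hc
  have h10 : ∑ i, w i * e i = ∑ i, a i := by
    apply Finset.sum_congr rfl
    intro i _
    by_cases hi : i = v
    · subst hi; simp [w, hav]
    · by_cases hz : a i = 0
      · simp [e, hz, Finsupp.single_apply, Ne.symm hi]
      · have : ¬ Γ.Adj v i := fun h => ha i hz (Or.inr h)
        simp [e, w, hi, this, Finsupp.single_apply, Ne.symm hi]
  omega

theorem path_mem (k : Type) [Field k] {n : ℕ} (Γ : SimpleGraph (Fin n)) (d : ℕ → Fin n)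
    (hd : ∀ l, Γ.Adj (d l) (d (l + 1))) (m : ℕ) :
    ∏ l ∈ Finset.range (2 * m), (X (d (l + 1)) : MvPolynomial (Fin n) k) ∈
      edgeIdeal k Γ ^ m := by
  induction m with
  | zero => simp
  | succ m ih =>
    rw [show 2 * (m + 1) = 2 * m + 1 + 1 by ring, Finset.prod_range_succ, Finset.prod_range_succ,
      mul_assoc, pow_succ]
    exact Ideal.mul_mem_mul ih (Ideal.subset_span ⟨_, _, hd _, rfl⟩)

theorem prod_zmod {M : Type*} [CommMonoid M] (r : ℕ) (g : ZMod (2 * r + 1) → M) :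
    ∏ i, g i = ∏ l ∈ Finset.range (2 * r + 1), g (l : ZMod (2 * r + 1)) := by
  rw [← Fin.prod_univ_eq_prod_range (fun l => g (l : ZMod (2 * r + 1)))]
  refine Fintype.prod_congr (α := Fin (2 * r + 1)) _ _ ?_
  intro i
  congr 1
  exact (ZMod.natCast_zmod_val (n := 2 * r + 1) i).symm

def GInv (k : Type) [Field k] {n : ℕ} (Γ : SimpleGraph (Fin n)) (S : Set (Fin n))
    (W : Finset (Fin n)) (t : ℕ) : Prop :=
  (∃ a : Fin n →₀ ℕ, (∀ i, a i ≠ 0 → i ∈ S) ∧ ∑ i, a i = 2 * t + 1 ∧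
    ∀ j ∈ W, ∃ q ∈ edgeIdeal k Γ ^ t, (monomial a 1 : MvPolynomial (Fin n) k) = X j * q) ∧
  ∀ j ∈ W, ∃ u ∈ W, Γ.Adj j u

theorem inv_base (k : Type) [Field k] {n : ℕ} (Γ : SimpleGraph (Fin n)) (S : Set (Fin n))
    (r : ℕ) (c : ZMod (2 * r + 1) → Fin n) (hcyc : IsOddCycle Γ (2 * r + 1) c)
    (hS : Set.range c ⊆ S) : GInv k Γ S (Finset.univ.image c) r := by
  classical
  obtain ⟨-, -, -, hadj⟩ := hcyc
  refine ⟨⟨∑ i, Finsupp.single (c i) 1, ?_, ?_, ?_⟩, ?_⟩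
  · intro i hi
    by_contra hiS
    apply hi
    rw [Finsupp.finsetSum_apply]
    apply Finset.sum_eq_zero
    intro x _
    rw [Finsupp.single_apply, if_neg]
    rintro rfl
    exact hiS (hS ⟨x, rfl⟩)
  · simp only [Finsupp.finsetSum_apply]
    rw [Finset.sum_comm]
    simp [Finsupp.single_apply, ZMod.card]
  · intro j hj
    obtain ⟨j, -, rfl⟩ := Finset.mem_image.1 hj
    refine ⟨∏ l ∈ Finset.range (2 * r), X (c (j + ((l + 1 : ℕ) : ZMod (2 * r + 1)))),
      path_mem k Γ (fun l => c (j + (l : ZMod (2 * r + 1)))) ?_ r, ?_⟩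
    · intro l
      have := hadj (j + l)
      rwa [add_assoc, ← Nat.cast_succ] at this
    · have h1 : (monomial (∑ i, Finsupp.single (c i) 1) 1 : MvPolynomial (Fin n) k) =
        ∏ i, X (c i) := by
        rw [monomial_sum_one]; rfl
      rw [h1, ← Equiv.prod_comp (Equiv.addLeft j), prod_zmod, Finset.prod_range_succ', mul_comm]
      simp
  · intro j hj
    obtain ⟨j, -, rfl⟩ := Finset.mem_image.1 hj
    exact ⟨c (j + 1), Finset.mem_image_of_mem _ (Finset.mem_univ _), hadj j⟩

theorem mono_two (k : Type) [Field k] {n : ℕ} (a : Fin n →₀ ℕ) (u w : Fin n) :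
    (monomial (a + (Finsupp.single u 1 + Finsupp.single w 1)) 1 : MvPolynomial (Fin n) k) =
      monomial a 1 * (X u * X w) := by
  simp [X, monomial_mul]

theorem inv_grow (k : Type) [Field k] {n : ℕ} (Γ : SimpleGraph (Fin n)) (S : Set (Fin n))
    (W : Finset (Fin n)) (t : ℕ) (h : GInv k Γ S W t) (u w : Fin n) (hu : u ∈ W)
    (huw : Γ.Adj u w) (huS : u ∈ S) (hwS : w ∈ S) : GInv k Γ S (insert w W) (t + 1) := by
  classical
  obtain ⟨⟨a, ha, hs, hq⟩, hn⟩ := h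
  have hedge : (X u * X w : MvPolynomial (Fin n) k) ∈ edgeIdeal k Γ :=
    Ideal.subset_span ⟨_, _, huw, rfl⟩
  refine ⟨⟨a + (Finsupp.single u 1 + Finsupp.single w 1), ?_, ?_, ?_⟩, ?_⟩
  · intro i hi
    by_cases h1 : i = u
    · rwa [h1]
    by_cases h2 : i = w
    · rwa [h2]
    apply ha
    simpa [Finsupp.single_apply, Ne.symm h1, Ne.symm h2] using hi
  · simp [Finset.sum_add_distrib, hs, Finsupp.single_apply]
    ring
  · intro j hj
    rw [mono_two]
    rw [Finset.mem_insert] at hj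
    by_cases hjW : j ∈ W
    · obtain ⟨q, hqI, hqe⟩ := hq j hjW
      refine ⟨q * (X u * X w), ?_, ?_⟩
      · rw [pow_succ]; exact Ideal.mul_mem_mul hqI hedge
      · rw [hqe]; ring
    · have hjw : j = w := by tauto
      subst hjw
      obtain ⟨u', hu', hadj⟩ := hn u hu
      obtain ⟨q, hqI, hqe⟩ := hq u' hu'
      refine ⟨q * (X u * X u'), ?_, ?_⟩
      · rw [pow_succ]; exact Ideal.mul_mem_mul hqI (Ideal.subset_span ⟨_, _, hadj, rfl⟩)
      · rw [hqe]; ring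
  · intro j hj
    rw [Finset.mem_insert] at hj
    rcases hj with rfl | hj
    · exact ⟨u, Finset.mem_insert_of_mem hu, huw.symm⟩
    · obtain ⟨x, hx, hadj⟩ := hn j hj
      exact ⟨x, Finset.mem_insert_of_mem hx, hadj⟩

theorem inv_up (k : Type) [Field k] {n : ℕ} (Γ : SimpleGraph (Fin n)) (S : Set (Fin n))
    (W : Finset (Fin n)) (hWS : (W : Set (Fin n)) ⊆ S) (hW : W.Nonempty) (t : ℕ)
    (h : GInv k Γ S W t) (d : ℕ) : GInv k Γ S W (t + d) := by
  classical
  induction d with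
  | zero => exact h
  | succ d ih =>
    obtain ⟨u, hu⟩ := hW
    obtain ⟨w, hw, hadj⟩ := ih.2 u hu
    have := inv_grow k Γ S W _ ih u w hu hadj (hWS hu) (hWS hw)
    rwa [Finset.insert_eq_of_mem hw] at this

theorem inv_final (k : Type) [Field k] (n : ℕ) (Γ : SimpleGraph (Fin n)) (v : Fin n)
    (W : Finset (Fin n)) (hW : W.Nonempty) (t : ℕ)
    (h : GInv k Γ ((closedNbhd Γ v)ᶜ : Set (Fin n)) W t)
    (hdom : ∀ j ∈ ((closedNbhd Γ v)ᶜ : Set (Fin n)), ∃ u ∈ W, Γ.Adj j u) :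
    Nontrivial (locCoh k ((edgeIdeal k Γ) ^ (t + 1)) 1) := by
  obtain ⟨⟨a, ha, hs, hq⟩, hn⟩ := h
  apply alg_main k n Γ v t a ha hs
  · obtain ⟨u, hu⟩ := hW
    obtain ⟨q, hqI, hqe⟩ := hq u hu
    rw [hqe]
    exact Ideal.mul_mem_left _ _ hqI
  · intro j hj
    obtain ⟨u, hu, hadj⟩ := hdom j hj
    obtain ⟨q, hqI, hqe⟩ := hq u hu
    rw [hqe, show X j * (X u * q) = q * (X j * X u) by ring, pow_succ]
    exact Ideal.mul_mem_mul hqI (Ideal.subset_span ⟨_, _, hadj, rfl⟩)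

theorem conn_step {n : ℕ} (Γ : SimpleGraph (Fin n)) (S : Set (Fin n))
    (hc : (Γ.induce S).Connected) (W : Set (Fin n)) (x y : Fin n) (hx : x ∈ W) (hxS : x ∈ S)
    (hy : y ∉ W) (hyS : y ∈ S) : ∃ u ∈ W, u ∈ S ∧ ∃ w ∉ W, w ∈ S ∧ Γ.Adj u w := by
  obtain ⟨p⟩ := hc.preconnected ⟨x, hxS⟩ ⟨y, hyS⟩
  obtain ⟨d, -, h1, h2⟩ := p.exists_boundary_dart {z | (z : Fin n) ∈ W} hx hy
  exact ⟨d.fst, h1, d.fst.2, d.snd, h2, d.snd.2, d.adj⟩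

theorem inv_exists (k : Type) [Field k] {n : ℕ} (Γ : SimpleGraph (Fin n)) (S : Set (Fin n))
    (hc : (Γ.induce S).Connected) (W : Finset (Fin n)) (hW : W.Nonempty)
    (hWS : (W : Set (Fin n)) ⊆ S) (t : ℕ) (h : GInv k Γ S W t) (d : ℕ)
    (hd : W.card + d ≤ S.ncard) :
    ∃ W' : Finset (Fin n), W ⊆ W' ∧ (W' : Set (Fin n)) ⊆ S ∧ W'.card = W.card + d ∧
      GInv k Γ S W' (t + d) := by
  classical
  induction d with
  | zero => exact ⟨W, subset_rfl, hWS, rfl, h⟩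
  | succ d ih =>
    obtain ⟨W', h1, h2, h3, h4⟩ := ih (by omega)
    have : ∃ y ∈ S, y ∉ (W' : Set (Fin n)) := by
      by_contra hcon
      push Not at hcon
      have h5 := Set.ncard_le_ncard hcon
      rw [Set.ncard_coe_finset] at h5
      omega
    obtain ⟨y, hyS, hyW⟩ := this
    obtain ⟨x, hx⟩ := hW
    obtain ⟨u, hu, huS, w, hw, hwS, hadj⟩ := conn_step Γ S hc W' x y (h1 hx) (hWS hx) hyW hyS
    refine ⟨insert w W', h1.trans (Finset.subset_insert _ _), ?_, ?_,
      inv_grow k Γ S W' _ h4 u w hu hadj huS hwS⟩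
    · rw [Finset.coe_insert]
      exact Set.insert_subset hwS h2
    · rw [Finset.card_insert_of_notMem hw, h3]; rfl

/-- Let `Γ` be a connected non-bipartite graph having at least one odd
cycle whose vertex set is not dominating. Assume there are an odd cycle `C` of length
`2r+1` and a vertex `v ∉ C` not adjacent to any vertex of `C` such that the induced
subgraph `Γ_{V ∖ N[v]}` is connected. Then:
(1) if `C = V ∖ N[v]`, then `H^1_m(R/I^t) ≠ 0` for all `t ≥ r + 1`;
(2) if `C ⊊ V ∖ N[v]`, then `H^1_m(R/I^t) ≠ 0` for all `t ≥ n - |N[v]| - r - 1`. -/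
theorem stmt5 (k : Type) [Field k] (n : ℕ) (Γ : SimpleGraph (Fin n))
    (hiso : NoIsolated Γ) (hconn : Γ.Connected) (hnb : ¬ Γ.Colorable 2)
    (hnondom : ∃ (m : ℕ) (c' : ZMod m → Fin n), IsOddCycle Γ m c' ∧
      ¬ Dominating Γ (Set.range c'))
    (r : ℕ) (hr : 1 ≤ r) (c : ZMod (2 * r + 1) → Fin n)
    (hcyc : IsOddCycle Γ (2 * r + 1) c)
    (v : Fin n) (hv : v ∉ Set.range c) (hvadj : ∀ u ∈ Set.range c, ¬ Γ.Adj v u)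
    (hindconn : (Γ.induce ((closedNbhd Γ v)ᶜ : Set (Fin n))).Connected) :
    (Set.range c = ((closedNbhd Γ v)ᶜ : Set (Fin n)) →
      ∀ t : ℕ, r + 1 ≤ t → Nontrivial (locCoh k ((edgeIdeal k Γ) ^ t) 1)) ∧
    (Set.range c ⊂ ((closedNbhd Γ v)ᶜ : Set (Fin n)) →
      ∀ t : ℕ, n - (closedNbhd Γ v).ncard - r - 1 ≤ t →
        Nontrivial (locCoh k ((edgeIdeal k Γ) ^ t) 1)) := by
  classical
  have hsub : Set.range c ⊆ ((closedNbhd Γ v)ᶜ : Set (Fin n)) := by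
    rintro x hx (h | h)
    · exact hv (h ▸ hx)
    · exact hvadj x hx h
  have hbase := inv_base k Γ _ r c hcyc hsub
  have hcoe : ((Finset.univ.image c : Finset (Fin n)) : Set (Fin n)) = Set.range c := by simp
  have hne : (Finset.univ.image c).Nonempty := ⟨c 0, by simp⟩
  have hcard : (Finset.univ.image c).card = 2 * r + 1 := by
    rw [Finset.card_image_of_injective _ hcyc.2.2.1, Finset.card_univ, ZMod.card]
  refine ⟨?_, ?_⟩
  · intro heq t ht
    obtain ⟨d, rfl⟩ := Nat.exists_eq_add_of_le ht
    have h1 := inv_up k Γ _ _ (by rw [hcoe]; exact hsub) hne r hbase d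
    have h2 := inv_final k n Γ v _ hne _ h1 (by
      intro j hj
      rw [← heq, ← hcoe] at hj
      exact h1.2 j hj)
    rwa [show r + 1 + d = r + d + 1 by ring]
  · intro hss t ht
    have hlt := Set.ncard_lt_ncard hss
    rw [← hcoe, Set.ncard_coe_finset, hcard] at hlt
    have hcompl : (closedNbhd Γ v).ncard + ((closedNbhd Γ v)ᶜ : Set (Fin n)).ncard = n := by
      rw [Set.ncard_add_ncard_compl, Nat.card_fin]
    obtain ⟨d, hd⟩ := Nat.exists_eq_add_of_lt hlt
    obtain ⟨W, h1, h2, h3, h4⟩ := inv_exists k Γ _ hindconn _ hne (by rw [hcoe]; exact hsub)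
      r hbase d (by omega)
    have hWne : W.Nonempty := hne.mono h1
    obtain ⟨e, rfl⟩ : ∃ e, t = r + d + 1 + e := Nat.exists_eq_add_of_le (by omega)
    have h5 := inv_up k Γ _ W h2 hWne _ h4 e
    have h6 := inv_final k n Γ v W hWne _ h5 (by
      intro j hj
      by_cases hjW : j ∈ W
      · exact h5.2 j hjW
      · obtain ⟨x, hx⟩ := hWne
        obtain ⟨u, hu, huS, w, hw, hwS, hadj⟩ :=
          conn_step Γ _ hindconn W x j hx (h2 hx) hjW hj
        have hjw : w = j := by
          by_contra hwj
          have h7 : ((insert w (insert j W) : Finset (Fin n)) : Set (Fin n)) ⊆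
              ((closedNbhd Γ v)ᶜ : Set (Fin n)) := by
            rw [Finset.coe_insert, Finset.coe_insert]
            exact Set.insert_subset hwS (Set.insert_subset hj h2)
          have h8 := Set.ncard_le_ncard h7
          rw [Set.ncard_coe_finset, Finset.card_insert_of_notMem (by
            rw [Finset.mem_insert]; rintro (h | h)
            · exact hwj h
            · exact hw h), Finset.card_insert_of_notMem hjW] at h8
          omega
        subst hjw
        exact ⟨u, hu, hadj.symm⟩)
    rwa [show r + d + 1 + e = r + d + e + 1 by ring]

end
end
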